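/- arXiv:1810.12415 — 5 statements merged into one kernel-verified Lean document; each statement's English description precedes it below -/
import Mathlib

section
/- 𝔏(ℚ⁺) is a proper subset of 𝔏(SL(2,ℚ)): every language recognized by a ℚ⁺-automaton is recognized by an SL(2,ℚ)-automaton (via s ↦ diag(s, 1/s)), and the language { a^{2^{2n+1}} : n ≥ 0 } is recognized by an SL(2,ℚ)-automaton but by no ℚ⁺-automaton. -/
/-!
Over a commutative group the register value of a run depends only on the multiset of its
transitions. By Higman's lemma, among infinitely many accepting runs there are two with the same
final state, the transitions of the first forming a subsequence of those of the second. Each gap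
between consecutive matched transitions is a cycle, and traversing every gap twice gives an
accepting run again. In a unary language this turns words of lengths `c * b ^ i < c * b ^ j` into
a word of length `2 * c * b ^ j - c * b ^ i`, which lies strictly between `c * b ^ j` and
`c * b ^ (j + 1)`.

In `SL(2,ℚ)`, on the other hand, `t = diag(2, 1/2)` and the transvection `a` with entry `1` satisfy
the Baumslag–Solitar relation `t * a * t⁻¹ = a ^ 4`, so `t ^ n * a ^ 2 * t⁻¹ ^ n = a ^ (2 * 4 ^ n)`
and a register over `SL(2,ℚ)` can check that a length is of the form `2 * 4 ^ n`.
-/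

/-- A `G`-automaton over input alphabet `α`: a nondeterministic finite automaton
equipped with a register holding an element of the group `G`. -/
structure GAutomaton (α : Type*) (G : Type*) [Group G] where
  /-- the (finite) state set -/
  Q : Type
  finQ : Finite Q
  /-- the initial state -/
  q0 : Q
  /-- the accepting states -/
  acc : Set Q
  /-- the (finite) transition relation; `none` stands for ε -/
  δ : Set (Q × Option α × Q × G)
  finδ : δ.Finite

namespace GAutomaton

variable {α : Type*} {G : Type*} [Group G]

/-- One computation step between configurations `(state, register, remaining input)`. -/
def Step (M : GAutomaton α G) (c c' : M.Q × G × List α) : Prop :=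
  ∃ σ m, (c.1, σ, c'.1, m) ∈ M.δ ∧ c'.2.1 = c.2.1 * m ∧
    match σ with
    | none => c'.2.2 = c.2.2
    | some s => c.2.2 = s :: c'.2.2

/-- `M.StepsIn k c c'` : configuration `c'` is reachable from `c` in exactly `k` steps. -/
def StepsIn (M : GAutomaton α G) : ℕ → (M.Q × G × List α) → (M.Q × G × List α) → Prop
  | 0, c, c' => c = c'
  | n + 1, c, c' => ∃ d, M.Step c d ∧ M.StepsIn n d c'

/-- `M` accepts the word `w` within `t` computation steps. -/
def AcceptsIn (M : GAutomaton α G) (w : List α) (t : ℕ) : Prop :=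
  ∃ k ≤ t, ∃ q ∈ M.acc, M.StepsIn k (M.q0, 1, w) (q, 1, [])

/-- The language recognized by `M`. -/
def lang (M : GAutomaton α G) : Language α := {w | ∃ t, M.AcceptsIn w t}

/-- `M` is real-time if every transition consumes an input symbol. -/
def RealTime (M : GAutomaton α G) : Prop := ∀ tr ∈ M.δ, tr.2.1 ≠ none

end GAutomaton

/-- `L ∈ 𝔏(G)` : the language `L` is recognized by some `G`-automaton. -/
def GRecognizable (G : Type*) [Group G] {α : Type*} (L : Language α) : Prop :=
  ∃ M : GAutomaton α G, M.lang = L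

/-- `L ∈ 𝔏(G)ʷ_{t(n)}` : `L` is recognized by a weakly `t(n)` time-bounded `G`-automaton. -/
def GRecognizableInTime (G : Type*) [Group G] {α : Type*} (L : Language α) (t : ℕ → ℕ) : Prop :=
  ∃ M : GAutomaton α G, M.lang = L ∧ ∀ w ∈ L, M.AcceptsIn w (t w.length)

/-- `L ∈ 𝔏(G)ʷ_{O(n)}` : `L` is recognized by a weakly linear-time bounded `G`-automaton. -/
def GRecognizableLinTime (G : Type*) [Group G] {α : Type*} (L : Language α) : Prop :=
  ∃ C : ℕ, GRecognizableInTime G L (fun n => C * n + C)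

/-- The unary language `{ a^(2^(2n+1)) : n ≥ 0 }`. -/
def LoddPow : Language (Fin 1) :=
  {w | ∃ n : ℕ, w = List.replicate (2 ^ (2 * n + 1)) 0}

namespace GAutomaton

variable {α : Type*} {G H : Type*} [Group G] [Group H]

/-- The transitions of an automaton, including those outside `M.δ`. -/
abbrev Transition (M : GAutomaton α G) : Type _ := M.Q × Option α × M.Q × G

/-- The effect on the register of a sequence of transitions. -/
def value (M : GAutomaton α G) (l : List M.Transition) : G :=
  (l.map fun t => t.2.2.2).prod

/-- The input consumed by a sequence of transitions. -/
def word (M : GAutomaton α G) (l : List M.Transition) : List α :=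
  l.filterMap fun t => t.2.1

/-- `M.IsRun p l q`: the transitions in `l` form a walk from `p` to `q` in the graph of `M`. -/
inductive IsRun (M : GAutomaton α G) : M.Q → List M.Transition → M.Q → Prop
  | nil (p : M.Q) : M.IsRun p [] p
  | cons {p p' q : M.Q} {σ : Option α} {m : G} {l : List M.Transition} :
      (p, σ, p', m) ∈ M.δ → M.IsRun p' l q → M.IsRun p ((p, σ, p', m) :: l) q

section Runs

variable {M : GAutomaton α G} {p p' q r : M.Q} {l l₁ l₂ u : List M.Transition}

theorem IsRun.single {σ : Option α} {m : G} (h : (p, σ, q, m) ∈ M.δ) :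
    M.IsRun p [(p, σ, q, m)] q :=
  .cons h (.nil q)

theorem IsRun.append (h₁ : M.IsRun p l₁ q) (h₂ : M.IsRun q l₂ r) : M.IsRun p (l₁ ++ l₂) r := by
  induction h₁ with
  | nil => exact h₂
  | cons ht _ ih => exact .cons ht (ih h₂)

theorem IsRun.flatten_replicate (h : M.IsRun p l p) (n : ℕ) :
    M.IsRun p (List.replicate n l).flatten p := by
  induction n with
  | zero => exact .nil p
  | succ n ih => simpa [List.replicate_succ] using h.append ih

theorem IsRun.replicate {σ : Option α} {m : G} (h : (p, σ, p, m) ∈ M.δ) (n : ℕ) :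
    M.IsRun p (List.replicate n (p, σ, p, m)) p := by
  simpa using (IsRun.single h).flatten_replicate n

theorem IsRun.mem_δ (h : M.IsRun p l q) : ∀ t ∈ l, t ∈ M.δ := by
  induction h with
  | nil => simp
  | cons ht _ ih => exact List.forall_mem_cons.2 ⟨ht, ih⟩

theorem exists_isRun_of_stepsIn {k : ℕ} {g h : G} {w : List α}
    (hk : M.StepsIn k (p, g, w) (q, h, [])) :
    ∃ l, M.IsRun p l q ∧ g * M.value l = h ∧ M.word l = w := by
  induction k generalizing p g w with
  | zero =>
    cases hk
    exact ⟨[], .nil _, by simp [value], rfl⟩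
  | succ k ih =>
    obtain ⟨⟨p', g', w'⟩, ⟨σ, m, ht, rfl, hw⟩, hs⟩ := hk
    obtain ⟨l, hl, rfl, rfl⟩ := ih hs
    refine ⟨_, .cons ht hl, by simp [value, mul_assoc], ?_⟩
    cases σ <;> simp_all [word]

theorem IsRun.exists_stepsIn (hl : M.IsRun p l q) (g : G) :
    ∃ k, M.StepsIn k (p, g, M.word l) (q, g * M.value l, []) := by
  induction hl generalizing g with
  | nil p => exact ⟨0, by simp [StepsIn, value, word]⟩
  | @cons p p' q σ m l ht _ ih =>
    obtain ⟨k, hk⟩ := ih (g * m)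
    refine ⟨k + 1, (p', g * m, M.word l), ⟨σ, m, ht, rfl, ?_⟩, by simpa [value, mul_assoc] using hk⟩
    cases σ <;> simp [word]

end Runs

theorem mem_lang_iff {M : GAutomaton α G} {w : List α} :
    w ∈ M.lang ↔ ∃ q ∈ M.acc, ∃ l, M.IsRun M.q0 l q ∧ M.value l = 1 ∧ M.word l = w := by
  constructor
  · rintro ⟨-, k, -, q, hq, hk⟩
    exact ⟨q, hq, by simpa using exists_isRun_of_stepsIn hk⟩
  · rintro ⟨q, hq, l, hl, hval, rfl⟩
    obtain ⟨k, hk⟩ := hl.exists_stepsIn 1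
    exact ⟨k, k, le_rfl, q, hq, by simpa only [hval, mul_one] using hk⟩

section MapRegister

/-- The action of a map between register groups on transitions. -/
def mapUpdate {Q : Type*} (f : G → H) (t : Q × Option α × Q × G) : Q × Option α × Q × H :=
  (t.1, t.2.1, t.2.2.1, f t.2.2.2)

/-- The automaton obtained from `M` by applying a homomorphism to every register update. -/
abbrev mapRegister (M : GAutomaton α G) (f : G →* H) : GAutomaton α H where
  Q := M.Q
  finQ := M.finQ
  q0 := M.q0
  acc := M.acc
  δ := mapUpdate f '' M.δ
  finδ := M.finδ.image _

variable {M : GAutomaton α G}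

theorem IsRun.mapRegister {p q : M.Q} {l : List M.Transition} (h : M.IsRun p l q) (f : G →* H) :
    (M.mapRegister f).IsRun p (l.map (mapUpdate f)) q := by
  induction h with
  | nil p => exact .nil (M := M.mapRegister f) p
  | cons ht _ ih => exact .cons (M := M.mapRegister f) ⟨_, ht, rfl⟩ ih

theorem exists_isRun_of_isRun_mapRegister {f : G →* H} {p q : (M.mapRegister f).Q}
    {l : List (M.mapRegister f).Transition} (h : (M.mapRegister f).IsRun p l q) :
    ∃ l', M.IsRun p l' q ∧ l'.map (mapUpdate f) = l := by
  induction h with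
  | nil p => exact ⟨[], .nil (M := M) p, rfl⟩
  | cons ht _ ih =>
    obtain ⟨⟨p, σ, p', m⟩, ht, ⟨⟩⟩ := ht
    obtain ⟨l, hl, rfl⟩ := ih
    exact ⟨_, .cons ht hl, rfl⟩

theorem lang_mapRegister (M : GAutomaton α G) {f : G →* H} (hf : Function.Injective f) :
    (M.mapRegister f).lang = M.lang := by
  have hvalue (l : List M.Transition) :
      (M.mapRegister f).value (l.map (mapUpdate f)) = f (M.value l) := by
    simp [value, mapUpdate, map_list_prod, Function.comp_def]
  have hword (l : List M.Transition) :
      (M.mapRegister f).word (l.map (mapUpdate f)) = M.word l := by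
    simp [word, mapUpdate, Function.comp_def]
  ext w
  simp only [mem_lang_iff]
  constructor
  · rintro ⟨q, hq, l, hl, hval, rfl⟩
    obtain ⟨l, hl', rfl⟩ := exists_isRun_of_isRun_mapRegister hl
    exact ⟨q, hq, l, hl', (map_eq_one_iff f hf).1 (hvalue l ▸ hval), (hword l).symm⟩
  · rintro ⟨q, hq, l, hl, hval, rfl⟩
    exact ⟨q, hq, _, hl.mapRegister f, by rw [hvalue, hval, map_one], hword l⟩

end MapRegister

end GAutomaton

theorem GRecognizable.of_injective {α G H : Type*} [Group G] [Group H] {L : Language α}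
    (h : GRecognizable G L) {f : G →* H} (hf : Function.Injective f) : GRecognizable H L := by
  obtain ⟨M, rfl⟩ := h
  exact ⟨M.mapRegister f, M.lang_mapRegister hf⟩

section Pumping

theorem exists_lt_eq_and_sublist {Q T : Type*} [Finite Q] {s : Set T} (hs : s.Finite)
    (q : ℕ → Q) (l : ℕ → List T) (hl : ∀ n, ∀ t ∈ l n, t ∈ s) :
    ∃ i j, i < j ∧ q i = q j ∧ (l i).Sublist (l j) := by
  have hlists := Set.PartiallyWellOrderedOn.partiallyWellOrderedOn_sublistForall₂ (· = ·)
    (hs.partiallyWellOrderedOn (r := (· = ·)))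
  have hpairs := (Set.finite_univ.partiallyWellOrderedOn (α := Q) (r := (· = ·))).prod hlists
  simpa [List.sublistForall₂_iff] using
    hpairs.exists_lt (f := fun n => (q n, l n)) fun n => ⟨Set.mem_univ _, hl n⟩

theorem coe_flatten_replicate {T : Type*} (n : ℕ) (l : List T) :
    ((List.replicate n l).flatten : Multiset T) = n • (l : Multiset T) := by
  induction n with
  | zero => simp
  | succ n ih => rw [List.replicate_succ, List.flatten_cons, ← Multiset.coe_add, ih, succ_nsmul']

theorem filterMap_nsmul {S T : Type*} (f : S → Option T) (n : ℕ) (s : Multiset S) :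
    Multiset.filterMap f (n • s) = n • Multiset.filterMap f s := by
  induction n with
  | zero => simp
  | succ n ih => rw [succ_nsmul, succ_nsmul, Multiset.filterMap_add, ih]

theorem nsmul_add_add_nsmul_add {A : Type*} [AddCommMonoid A] {k : ℕ} {l l₁ l₂ : A}
    (h : l + k • l₁ = (k + 1) • l₂) (u t : A) :
    (k + 1) • u + (t + l) + k • (t + l₁) = (k + 1) • (u + (t + l₂)) :=
  calc
    (k + 1) • u + (t + l) + k • (t + l₁) = (k + 1) • u + ((k + 1) • t + (l + k • l₁)) := by
      rw [nsmul_add, succ_nsmul t]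
      abel
    _ = (k + 1) • (u + (t + l₂)) := by rw [h, nsmul_add, nsmul_add]

namespace GAutomaton

variable {α G : Type*}

theorem IsRun.exists_pump [Group G] {M : GAutomaton α G} {p p' q : M.Q}
    {l₁ l₂ u : List M.Transition} (hsub : l₁.Sublist l₂) (h₁ : M.IsRun p l₁ q)
    (hu : M.IsRun p u p') (h₂ : M.IsRun p' l₂ q) (k : ℕ) :
    ∃ l, M.IsRun p l q ∧
      (l + k • l₁ : Multiset M.Transition) = (k + 1) • (u + l₂ : Multiset M.Transition) := by
  -- `u` collects the transitions of the long run skipped since the last one matched in `l₁`. At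
  -- the next match both runs are in the same state, so `u` is a cycle and can be iterated.
  induction hsub generalizing p p' u with
  | slnil =>
    cases h₁
    cases h₂
    exact ⟨_, hu.flatten_replicate (k + 1), by simp [coe_flatten_replicate]⟩
  | cons t _ ih =>
    cases h₂ with
    | cons ht h₂ =>
      obtain ⟨l, hl, hpump⟩ := ih h₁ (hu.append (.single ht)) h₂
      exact ⟨l, hl, by
        simpa only [Multiset.coe_add, List.append_assoc, List.singleton_append] using hpump⟩
  | @cons_cons l₁ l₂ t _ ih =>
    cases h₁ with
    | cons ht h₁ =>
      cases h₂ with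
      | cons _ h₂ =>
        obtain ⟨l, hl, hpump⟩ := ih h₁ (.nil _) h₂
        refine ⟨_, (hu.flatten_replicate (k + 1)).append (.cons ht hl), ?_⟩
        simp only [Multiset.coe_nil, zero_add] at hpump
        simpa only [← Multiset.coe_add, coe_flatten_replicate, ← Multiset.cons_coe,
          ← Multiset.singleton_add] using nsmul_add_add_nsmul_add hpump _ _

theorem exists_lt_forall_exists_mem_lang [CommGroup G] (M : GAutomaton α G) (w : ℕ → List α)
    (hw : ∀ n, w n ∈ M.lang) :
    ∃ i j, i < j ∧ ∀ k : ℕ, ∃ v ∈ M.lang,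
      (v + k • w i : Multiset α) = (k + 1) • (w j : Multiset α) := by
  simp only [mem_lang_iff, value, word] at hw
  choose q hq l hl hval hword using hw
  have := M.finQ
  obtain ⟨i, j, hij, hqij, hsub⟩ := exists_lt_eq_and_sublist M.finδ q l fun n => (hl n).mem_δ
  refine ⟨i, j, hij, fun k => ?_⟩
  obtain ⟨l', hl', hpump⟩ := IsRun.exists_pump hsub (hl i) (.nil _) (hqij ▸ hl j) k
  refine ⟨M.word l', mem_lang_iff.2 ⟨q i, hq i, l', hl', ?_, rfl⟩, ?_⟩
  · simpa [value, Multiset.map_nsmul, Multiset.prod_nsmul, hval] using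
      congrArg (fun s => (s.map fun t => t.2.2.2).prod) hpump
  · simpa [word, Multiset.filterMap_add, filterMap_nsmul, hword] using
      congrArg (Multiset.filterMap fun t => t.2.1) hpump

end GAutomaton

end Pumping

/-- The unary language of words in the letter `s` whose length is in the geometric progression
`c, c * b, c * b ^ 2, …`. -/
def geometricLanguage {α : Type*} (s : α) (c b : ℕ) : Language α :=
  {w | ∃ n : ℕ, w = List.replicate (c * b ^ n) s}

theorem LoddPow_eq_geometricLanguage : LoddPow = geometricLanguage 0 2 4 := by
  ext w
  have hpow (n : ℕ) : 2 ^ (2 * n + 1) = 2 * 4 ^ n := by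
    rw [pow_succ', pow_mul]
    norm_num
  simp only [LoddPow, geometricLanguage, hpow]

theorem not_gRecognizable_geometricLanguage {α G : Type*} [CommGroup G] (s : α) {c b : ℕ}
    (hc : 0 < c) (hb : 1 < b) : ¬ GRecognizable G (geometricLanguage s c b) := by
  rintro ⟨M, hM⟩
  obtain ⟨i, j, hij, hpump⟩ := M.exists_lt_forall_exists_mem_lang
    (fun n => List.replicate (c * b ^ n) s) fun n => hM ▸ ⟨n, rfl⟩
  obtain ⟨v, hv, hcount⟩ := hpump 1
  obtain ⟨n, rfl⟩ : v ∈ geometricLanguage s c b := hM ▸ hv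
  have hlen : b ^ n + b ^ i = 2 * b ^ j := by
    have := congrArg Multiset.card hcount
    simp only [one_nsmul, Multiset.card_add, Multiset.card_nsmul, Multiset.coe_card,
      List.length_replicate] at this
    exact Nat.eq_of_mul_eq_mul_left hc (by linarith)
  have hi : 0 < b ^ i := by positivity
  have hij : b ^ i < b ^ j := Nat.pow_lt_pow_right hb hij
  have hjn : j < n := (Nat.pow_lt_pow_iff_right hb).1 (by omega)
  have hnj : b ^ n < b ^ (j + 1) :=
    calc
      b ^ n < 2 * b ^ j := by omega
      _ ≤ b * b ^ j := Nat.mul_le_mul_right _ hb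
      _ = b ^ (j + 1) := (pow_succ' b j).symm
  have hnj : n < j + 1 := (Nat.pow_lt_pow_iff_right hb).1 hnj
  omega

section BaumslagSolitar

variable {G : Type*} [Group G] {t a : G} {b : ℕ}

theorem semiconjBy_pow_pow (h : SemiconjBy t a (a ^ b)) (n : ℕ) :
    SemiconjBy (t ^ n) a (a ^ b ^ n) := by
  induction n with
  | zero => simp
  | succ n ih =>
    rw [pow_succ', pow_succ', pow_mul]
    exact (h.pow_right (b ^ n)).mul_left ih

theorem pow_mul_pow_eq_pow_mul_pow_iff (h : SemiconjBy t a (a ^ b)) (ha : ¬ IsOfFinOrder a)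
    (hb : 1 < b) {i j m n : ℕ} : a ^ i * t ^ m = a ^ j * t ^ n ↔ i = j ∧ m = n := by
  refine ⟨fun heq => ?_, fun ⟨hij, hmn⟩ => hij ▸ hmn ▸ rfl⟩
  have hinj : Function.Injective fun n : ℕ => a ^ n := injective_pow_iff_not_isOfFinOrder.2 ha
  have hconj (i m : ℕ) : SemiconjBy (a ^ i * t ^ m) a (a ^ b ^ m) :=
    SemiconjBy.mul_left (Commute.pow_pow_self a i (b ^ m)) (semiconjBy_pow_pow h m)
  have hpow : a ^ b ^ m = a ^ b ^ n :=
    mul_right_cancel ((hconj i m).eq.symm.trans (heq ▸ (hconj j n).eq))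
  obtain rfl : m = n := Nat.pow_right_injective hb (hinj hpow)
  exact ⟨hinj (mul_right_cancel heq), rfl⟩

theorem pow_mul_pow_mul_inv_pow_mul_inv_pow_eq_one_iff (h : SemiconjBy t a (a ^ b))
    (ha : ¬ IsOfFinOrder a) (hb : 1 < b) {c k m n : ℕ} :
    t ^ n * a ^ c * t⁻¹ ^ m * a⁻¹ ^ k = 1 ↔ n = m ∧ k = c * b ^ n := by
  have hmove : t ^ n * a ^ c = a ^ (c * b ^ n) * t ^ n := by
    rw [mul_comm c, pow_mul]
    exact ((semiconjBy_pow_pow h n).pow_right c).eq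
  rw [inv_pow, inv_pow, mul_inv_eq_one, mul_inv_eq_iff_eq_mul, hmove,
    pow_mul_pow_eq_pow_mul_pow_iff h ha hb, and_comm, @eq_comm _ k]

end BaumslagSolitar

section PhaseAutomaton

open GAutomaton

variable {α G : Type*} [Group G] {u x v y : G} {s : α}

/-- The automaton that multiplies its register by a power of `u`, once by `x`, by a power of `v`,
and finally by `y` for each letter `s` of the input. -/
abbrev phaseAutomaton (u x v y : G) (s : α) : GAutomaton α G where
  Q := Fin 3
  finQ := inferInstance
  q0 := 0
  acc := {2}
  δ := {(0, none, 0, u), (0, none, 1, x), (1, none, 1, v), (1, none, 2, 1), (2, some s, 2, y)}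
  finδ := by simp

/-- The pairs (register effect, consumed input) of the runs of `phaseAutomaton u x v y s` from a
given state to the accepting one. -/
def phaseOutputs (u x v y : G) (s : α) : Fin 3 → Set (G × List α)
  | 0 => {o | ∃ n m k : ℕ, o = (u ^ n * x * v ^ m * y ^ k, List.replicate k s)}
  | 1 => {o | ∃ m k : ℕ, o = (v ^ m * y ^ k, List.replicate k s)}
  | 2 => {o | ∃ k : ℕ, o = (y ^ k, List.replicate k s)}

theorem mem_phaseOutputs_of_isRun {p q : (phaseAutomaton u x v y s).Q}
    {l : List (phaseAutomaton u x v y s).Transition}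
    (h : (phaseAutomaton u x v y s).IsRun p l q) (hq : q = (2 : Fin 3)) :
    ((phaseAutomaton u x v y s).value l, (phaseAutomaton u x v y s).word l) ∈
      phaseOutputs u x v y s p := by
  induction h with
  | nil =>
    subst hq
    exact ⟨0, by simp [value, word]⟩
  | cons ht _ ih =>
    have hout := ih hq
    simp only [Set.mem_insert_iff, Set.mem_singleton_iff, Prod.mk.injEq] at ht
    obtain ⟨rfl, rfl, rfl, rfl⟩ | ⟨rfl, rfl, rfl, rfl⟩ | ⟨rfl, rfl, rfl, rfl⟩ |
      ⟨rfl, rfl, rfl, rfl⟩ | ⟨rfl, rfl, rfl, rfl⟩ := ht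
    · obtain ⟨n, m, k, hout⟩ := hout
      exact ⟨n + 1, m, k, by simp_all [value, word, pow_succ', mul_assoc]⟩
    · obtain ⟨m, k, hout⟩ := hout
      exact ⟨0, m, k, by simp_all [value, word, mul_assoc]⟩
    · obtain ⟨m, k, hout⟩ := hout
      exact ⟨m + 1, k, by simp_all [value, word, pow_succ', mul_assoc]⟩
    · obtain ⟨k, hout⟩ := hout
      exact ⟨0, k, by simp_all [value, word]⟩
    · obtain ⟨k, hout⟩ := hout
      exact ⟨k + 1, by simp_all [value, word, pow_succ', List.replicate_succ]⟩

theorem exists_isRun_phaseAutomaton (u x v y : G) (s : α) (n m k : ℕ) :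
    ∃ l, (phaseAutomaton u x v y s).IsRun (0 : Fin 3) l (2 : Fin 3) ∧
      (phaseAutomaton u x v y s).value l = u ^ n * x * v ^ m * y ^ k ∧
      (phaseAutomaton u x v y s).word l = List.replicate k s := by
  let M := phaseAutomaton u x v y s
  have hu : M.IsRun (0 : Fin 3) (List.replicate n (0, none, 0, u)) (0 : Fin 3) :=
    .replicate (by simp [M]) n
  have hx : M.IsRun (0 : Fin 3) [(0, none, 1, x)] (1 : Fin 3) := .single (by simp [M])
  have hv : M.IsRun (1 : Fin 3) (List.replicate m (1, none, 1, v)) (1 : Fin 3) :=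
    .replicate (by simp [M]) m
  have hone : M.IsRun (1 : Fin 3) [(1, none, 2, 1)] (2 : Fin 3) := .single (by simp [M])
  have hy : M.IsRun (2 : Fin 3) (List.replicate k (2, some s, 2, y)) (2 : Fin 3) :=
    .replicate (by simp [M]) k
  exact ⟨_, hu.append (hx.append (hv.append (hone.append hy))), by simp [value, mul_assoc],
    by simp [word]⟩

theorem mem_lang_phaseAutomaton {w : List α} :
    w ∈ (phaseAutomaton u x v y s).lang ↔
      ∃ n m k : ℕ, u ^ n * x * v ^ m * y ^ k = 1 ∧ w = List.replicate k s := by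
  rw [mem_lang_iff]
  constructor
  · rintro ⟨q, hq, l, hl, hval, rfl⟩
    obtain ⟨n, m, k, hout⟩ := mem_phaseOutputs_of_isRun hl hq
    obtain ⟨hvalue, hword⟩ := Prod.mk.inj hout
    exact ⟨n, m, k, hvalue.symm.trans hval, hword⟩
  · rintro ⟨n, m, k, hval, rfl⟩
    obtain ⟨l, hl, hvalue, hword⟩ := exists_isRun_phaseAutomaton u x v y s n m k
    exact ⟨_, rfl, l, hl, hvalue.trans hval, hword⟩

theorem gRecognizable_geometricLanguage {t a : G} {b : ℕ} (h : SemiconjBy t a (a ^ b))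
    (ha : ¬ IsOfFinOrder a) (hb : 1 < b) (s : α) (c : ℕ) :
    GRecognizable G (geometricLanguage s c b) := by
  refine ⟨phaseAutomaton t (a ^ c) t⁻¹ a⁻¹ s, ?_⟩
  ext w
  simp only [mem_lang_phaseAutomaton, pow_mul_pow_mul_inv_pow_mul_inv_pow_eq_one_iff h ha hb]
  constructor
  · rintro ⟨n, -, -, ⟨-, rfl⟩, rfl⟩
    exact ⟨n, rfl⟩
  · rintro ⟨n, rfl⟩
    exact ⟨n, n, _, ⟨rfl, rfl⟩, rfl⟩

end PhaseAutomaton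

section SpecialLinear

open Matrix SpecialLinearGroup

variable {R : Type*} [CommRing R]

theorem transvection_pow {ι : Type*} [DecidableEq ι] [Fintype ι] {i j : ι} (hij : i ≠ j) (x : R)
    (n : ℕ) : transvection hij x ^ n = transvection hij (n • x) := by
  induction n with
  | zero => simp
  | succ n ih => rw [pow_succ, ih, succ_nsmul, transvection_add]

theorem not_isOfFinOrder_transvection_one [CharZero R] {ι : Type*} [DecidableEq ι] [Fintype ι]
    {i j : ι} (hij : i ≠ j) : ¬ IsOfFinOrder (transvection hij (1 : R)) := by
  rw [← injective_pow_iff_not_isOfFinOrder]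
  intro m n h
  simp only [transvection_pow] at h
  simpa [transvection_coe, hij] using congr($h i j)

/-- The homomorphism `u ↦ diag(u, u⁻¹)`. -/
def diagHom : Rˣ →* SpecialLinearGroup (Fin 2) R where
  toFun u := ⟨!![(u : R), 0; 0, (u⁻¹ : Rˣ)], by simp⟩
  map_one' := Subtype.ext <| by simp [one_fin_two]
  map_mul' u v := Subtype.ext <|
    .trans (by simp [mul_comm]) (Matrix.SpecialLinearGroup.coe_mul _ _).symm

theorem coe_diagHom (u : Rˣ) :
    (diagHom u : Matrix (Fin 2) (Fin 2) R) = !![(u : R), 0; 0, (u⁻¹ : Rˣ)] :=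
  rfl

theorem diagHom_injective : Function.Injective (diagHom (R := R)) := fun _ _ h =>
  Units.ext congr($h 0 0)

theorem semiconjBy_diagHom_transvection (u : Rˣ) (x : R) :
    SemiconjBy (diagHom u) (transvection zero_ne_one x) (transvection zero_ne_one (u ^ 2 * x)) := by
  ext i j
  fin_cases i <;> fin_cases j <;> simp [coe_diagHom, transvection_coe, Matrix.mul_apply, pow_two,
    mul_right_comm _ x]

theorem semiconjBy_diagHom_two :
    SemiconjBy (diagHom (Units.mk0 (2 : ℚ) two_ne_zero)) (transvection zero_ne_one 1)
      (transvection zero_ne_one 1 ^ 4) := by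
  convert semiconjBy_diagHom_transvection (Units.mk0 (2 : ℚ) two_ne_zero) 1 using 1
  rw [transvection_pow]
  norm_num

/-- The inclusion of the positive elements of an ordered field into its group of units. -/
def posToUnits (K : Type*) [Field K] [LinearOrder K] [IsStrictOrderedRing K] :
    {x : K // 0 < x} →* Kˣ :=
  MonoidHom.toHomUnits { toFun := Subtype.val, map_one' := rfl, map_mul' := fun _ _ => rfl }

theorem posToUnits_injective (K : Type*) [Field K] [LinearOrder K] [IsStrictOrderedRing K] :
    Function.Injective (posToUnits K) := fun _ _ h =>
  Subtype.ext congr(($h : K))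

end SpecialLinear

theorem Qpos_lt_SL2Q_general {G H : Type*} [CommGroup G] [Group H] {f : G →* H}
    (hf : Function.Injective f) {t a : H} (h : SemiconjBy t a (a ^ 4)) (ha : ¬ IsOfFinOrder a) :
    (∀ (α : Type*) (L : Language α), GRecognizable G L → GRecognizable H L) ∧
      GRecognizable H LoddPow ∧ ¬ GRecognizable G LoddPow := by
  rw [LoddPow_eq_geometricLanguage]
  exact ⟨fun _ _ hL => hL.of_injective hf,
    gRecognizable_geometricLanguage h ha (by norm_num) 0 2,
    not_gRecognizable_geometricLanguage 0 (by norm_num) (by norm_num)⟩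

/-- `𝔏(ℚ⁺) ⊊ 𝔏(SL(2,ℚ))`, where `ℚ⁺ = {q : ℚ // 0 < q}` is the
multiplicative group of positive rationals. -/
theorem Qpos_lt_SL2Q :
    (∀ (α : Type) [Fintype α] (L : Language α),
      GRecognizable {q : ℚ // 0 < q} L →
        GRecognizable (Matrix.SpecialLinearGroup (Fin 2) ℚ) L) ∧
    GRecognizable (Matrix.SpecialLinearGroup (Fin 2) ℚ) LoddPow ∧
    ¬ GRecognizable {q : ℚ // 0 < q} LoddPow := by
  have hgen := Qpos_lt_SL2Q_general (f := diagHom.comp (posToUnits ℚ))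
    (diagHom_injective.comp (posToUnits_injective ℚ)) semiconjBy_diagHom_two
    (not_isOfFinOrder_transvection_one zero_ne_one)
  exact ⟨fun α _ L => hgen.1 α L, hgen.2⟩
end

section
/- Let G_BS be the subgroup of GL(2,ℚ) generated by the matrices A = [[1,0],[-1,1]] and B = [[1/2,0],[0,1]] (this group satisfies B·A·B⁻¹ = A² and is isomorphic to the Baumslag–Solitar group BS(1,2)). The unary language UPOW = { a^{2^n} : n ≥ 0 } is recognized by a G_BS-automaton; since UPOW is not context-free, 𝔏(G_BS) is not contained in the class CF of context-free languages. -/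
/-- The matrix `A = [[1,0],[-1,1]]` as an element of `GL(2,ℚ)`. -/
noncomputable def BSmatA : GL (Fin 2) ℚ :=
  Matrix.GeneralLinearGroup.mkOfDetNeZero !![1, 0; -1, 1]
    (by simp [Matrix.det_fin_two_of])

/-- The matrix `B = [[1/2,0],[0,1]]` as an element of `GL(2,ℚ)`. -/
noncomputable def BSmatB : GL (Fin 2) ℚ :=
  Matrix.GeneralLinearGroup.mkOfDetNeZero !![1/2, 0; 0, 1]
    (by norm_num [Matrix.det_fin_two_of])

/-- `G_BS`, the subgroup of `GL(2,ℚ)` generated by `A` and `B`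
(isomorphic to the Baumslag–Solitar group `BS(1,2)`). -/
noncomputable def GBS : Subgroup (GL (Fin 2) ℚ) := Subgroup.closure {BSmatA, BSmatB}

/-- The unary language `UPOW = { a^(2^n) : n ≥ 0 }`. -/
def UPOW : Language (Fin 1) := {w | ∃ n : ℕ, w = List.replicate (2 ^ n) 0}

/-!
The automaton guesses `i` and `j`, loads `Bⁱ A B⁻ʲ` into its register without reading any input, and
then multiplies by `A⁻¹` for each letter read.  So it accepts `aᵐ` exactly when `Bⁱ A = Aᵐ Bʲ` for
some `i` and `j`, and comparing matrix entries this means `i = j` and `m = 2ⁱ`.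

`UPOW` is not context-free by the pumping lemma: pumping a word of length `2ᵖ` once, where `p` is
the pumping length, gives a length strictly between `2ᵖ` and `2ᵖ⁺¹`.  The pumping lemma itself needs
no minimal derivation trees: a nonterminal on top of a tree either recurs below with some terminals
around it, which can be pumped, or the subtree at its lowest occurrence has the same yield, and that
subtree does not use the nonterminal again.
-/

section Derivations

variable {T : Type*} {g : ContextFreeGrammar T} {A B : g.NT} {s t : List (Symbol T g.NT)}
  {u v w x y : List T} {F : Finset g.NT}

theorem derives_of_mem_rules {r : ContextFreeRule T g.NT} (hr : r ∈ g.rules) :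
    g.Derives [.nonterminal r.input] r.output :=
  ContextFreeGrammar.Produces.single ⟨r, hr, ContextFreeRule.Rewrites.input_output⟩

theorem derives_append {s' t' : List (Symbol T g.NT)} (hs : g.Derives s s')
    (ht : g.Derives t t') : g.Derives (s ++ t) (s' ++ t') :=
  (hs.append_right t).trans (ht.append_left s')

/-- The derivability of the sentential form `u A v` from `s`, with terminal words `u` and `v`. -/
def DerivesAround (g : ContextFreeGrammar T) (s : List (Symbol T g.NT)) (u : List T) (A : g.NT)
    (v : List T) : Prop :=
  g.Derives s (u.map .terminal ++ [.nonterminal A] ++ v.map .terminal)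

namespace DerivesAround

theorem refl (A : g.NT) : DerivesAround g [.nonterminal A] [] A [] :=
  ContextFreeGrammar.Derives.refl _

theorem derives_subst (h : DerivesAround g s u A v) (hA : g.Derives [.nonterminal A] t) :
    g.Derives s (u.map .terminal ++ t ++ v.map .terminal) :=
  h.trans ((hA.append_left _).append_right _)

theorem derives_word (h : DerivesAround g s u A v)
    (hA : g.Derives [.nonterminal A] (x.map .terminal)) :
    g.Derives s ((u ++ x ++ v).map .terminal) := by
  simpa using h.derives_subst hA

theorem trans (h : DerivesAround g s u A v) (hA : DerivesAround g [.nonterminal A] x B y) :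
    DerivesAround g s (u ++ x) B (y ++ v) := by
  simpa [DerivesAround] using h.derives_subst hA

theorem append_left (h : DerivesAround g s u A v) (ht : g.Derives t (w.map .terminal)) :
    DerivesAround g (t ++ s) (w ++ u) A v := by
  simpa [DerivesAround] using derives_append ht h

theorem cons_terminal (h : DerivesAround g s u A v) (a : T) :
    DerivesAround g (.terminal a :: s) (a :: u) A v :=
  h.append_left (t := [.terminal a]) (w := [a]) (.refl _)

theorem append_right (h : DerivesAround g s u A v) (ht : g.Derives t (w.map .terminal)) :
    DerivesAround g (s ++ t) u A (v ++ w) := by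
  simpa [DerivesAround] using derives_append h ht

theorem iterate (h : DerivesAround g [.nonterminal A] u A v) (n : ℕ) :
    DerivesAround g [.nonterminal A] (List.replicate n u).flatten A
      (List.replicate n v).flatten := by
  induction n with
  | zero => exact refl A
  | succ n ih =>
    rw [List.replicate_succ, List.replicate_succ']
    simpa using h.trans ih

end DerivesAround

/-- `YieldsWithin g F s w`: the symbols of `s` are the roots of derivation trees with joint yield
`w` whose inner nodes are labelled by nonterminals in `F`. -/
inductive YieldsWithin (g : ContextFreeGrammar T) (F : Finset g.NT) :
    List (Symbol T g.NT) → List T → Prop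
  | nil : YieldsWithin g F [] []
  | terminal (t : T) {s : List (Symbol T g.NT)} {w : List T} (hs : YieldsWithin g F s w) :
      YieldsWithin g F (.terminal t :: s) (t :: w)
  | nonterminal {r : ContextFreeRule T g.NT} (hr : r ∈ g.rules) (hF : r.input ∈ F)
      {s : List (Symbol T g.NT)} {v w : List T} (ho : YieldsWithin g F r.output v)
      (hs : YieldsWithin g F s w) : YieldsWithin g F (.nonterminal r.input :: s) (v ++ w)

namespace YieldsWithin

theorem derives (h : YieldsWithin g F s w) : g.Derives s (w.map .terminal) := by
  induction h with
  | nil => rfl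
  | terminal t _ ih => exact ih.append_left [.terminal t]
  | nonterminal hr _ _ _ ihO ihS =>
    simpa using derives_append ((derives_of_mem_rules hr).trans ihO) ihS

theorem mem (h : YieldsWithin g F [.nonterminal A] w) : A ∈ F := by
  cases h
  assumption

theorem append (hs : YieldsWithin g F s v) (ht : YieldsWithin g F t w) :
    YieldsWithin g F (s ++ t) (v ++ w) := by
  induction hs with
  | nil => exact ht
  | terminal a _ ih => exact ih.terminal a
  | nonterminal hr hF ho _ _ ih =>
    rw [List.append_assoc]
    exact ho.nonterminal hr hF ih

theorem exists_of_append (h : YieldsWithin g F (s ++ t) w) :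
    ∃ u v, u ++ v = w ∧ YieldsWithin g F s u ∧ YieldsWithin g F t v := by
  induction s generalizing w with
  | nil => exact ⟨[], w, rfl, nil, h⟩
  | cons a s ih =>
    cases h with
    | terminal a hs =>
      obtain ⟨u, v, rfl, hu, hv⟩ := ih hs
      exact ⟨a :: u, v, rfl, hu.terminal a, hv⟩
    | nonterminal hr hF ho hs =>
      obtain ⟨u, v, rfl, hu, hv⟩ := ih hs
      exact ⟨_, v, List.append_assoc .., ho.nonterminal hr hF hu, hv⟩

theorem map_terminal (F : Finset g.NT) (w : List T) : YieldsWithin g F (w.map .terminal) w := by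
  induction w with
  | nil => exact nil
  | cons a w ih => exact ih.terminal a

theorem of_derives (hF : ∀ r ∈ g.rules, r.input ∈ F) (h : g.Derives s (w.map .terminal)) :
    YieldsWithin g F s w := by
  induction h using Relation.ReflTransGen.head_induction_on with
  | refl => exact map_terminal F w
  | head hst _ ih =>
    obtain ⟨r, hr, hrw⟩ := hst
    obtain ⟨p, q, rfl, rfl⟩ := hrw.exists_parts
    obtain ⟨_, wq, rfl, hpo, hq⟩ := ih.exists_of_append
    obtain ⟨wp, wo, rfl, hp, ho⟩ := hpo.exists_of_append
    have hinput : YieldsWithin g F [.nonterminal r.input] wo := by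
      simpa using ho.nonterminal hr (hF r hr) nil
    exact (hp.append hinput).append hq

/-- If `A` is used at all, then `x` is the yield of the subtree at a lowest occurrence of `A`. -/
theorem erase_or_exists_derivesAround [DecidableEq g.NT] (A : g.NT) (h : YieldsWithin g F s w) :
    YieldsWithin g (F.erase A) s w ∨ ∃ r ∈ g.rules, r.input = A ∧ ∃ u x v, w = u ++ x ++ v ∧
      YieldsWithin g (F.erase A) r.output x ∧ DerivesAround g s u A v := by
  induction h with
  | nil => exact .inl nil
  | terminal a _ ih =>
    rcases ih with hs | ⟨r, hr, hA, u, x, v, rfl, hx, hs⟩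
    · exact .inl (hs.terminal a)
    · exact .inr ⟨r, hr, hA, a :: u, x, v, rfl, hx, hs.cons_terminal a⟩
  | @nonterminal r hr hF s wo w ho hs ihO ihS =>
    have hroot := derives_of_mem_rules hr
    rcases ihO with hO | ⟨r', hr', hA, u, x, v, rfl, hx, hO⟩
    · obtain rfl | hA := eq_or_ne r.input A
      · exact .inr ⟨r, hr, rfl, [], wo, w, rfl, hO, (DerivesAround.refl _).append_right hs.derives⟩
      rcases ihS with hS | ⟨r', hr', hA', u, x, v, rfl, hx, hS⟩
      · exact .inl (hO.nonterminal hr (Finset.mem_erase.2 ⟨hA, hF⟩) hS)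
      · exact .inr ⟨r', hr', hA', wo ++ u, x, v, by simp, hx,
          hS.append_left (hroot.trans ho.derives)⟩
    · exact .inr ⟨r', hr', hA, u, x, v ++ w, by simp, hx,
        DerivesAround.append_right (hroot.trans hO) hs.derives⟩

/-- Take for `A` a lowest inner node with yield longer than `K`: it has at most `m` children, each
yielding at most `K` letters. -/
theorem exists_derivesAround_length_le {K m : ℕ} (hK : 1 ≤ K)
    (hm : ∀ r ∈ g.rules, r.output.length ≤ m) (h : YieldsWithin g F s w)
    (hw : K * s.length < w.length) :
    ∃ A u x v, w = u ++ x ++ v ∧ DerivesAround g s u A v ∧ YieldsWithin g F [.nonterminal A] x ∧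
      K < x.length ∧ x.length ≤ K * m := by
  induction h with
  | nil => simp at hw
  | terminal a _ ih =>
    obtain ⟨A, u, x, v, rfl, hs, hx⟩ := ih (by simp only [List.length_cons] at hw; linarith)
    exact ⟨A, a :: u, x, v, rfl, hs.cons_terminal a, hx⟩
  | @nonterminal r hr hF s wo w ho hs ihO ihS =>
    have hroot := derives_of_mem_rules hr
    obtain hlong | hshort := lt_or_ge K wo.length
    · obtain hle | hgt := le_or_gt wo.length (K * m)
      · exact ⟨r.input, [], wo, w, rfl, (DerivesAround.refl _).append_right hs.derives,
          by simpa using ho.nonterminal hr hF nil, hlong, hle⟩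
      · obtain ⟨A, u, x, v, rfl, hO, hx⟩ := ihO ((Nat.mul_le_mul_left K (hm r hr)).trans_lt hgt)
        exact ⟨A, u, x, v ++ w, by simp,
          DerivesAround.append_right (hroot.trans hO) hs.derives, hx⟩
    · have hlen : K * s.length < w.length := by
        simp only [List.length_cons, List.length_append] at hw
        linarith
      obtain ⟨A, u, x, v, rfl, hS, hx⟩ := ihS hlen
      exact ⟨A, wo ++ u, x, v, by simp, hS.append_left (hroot.trans ho.derives), hx⟩

end YieldsWithin

/-- `w` splits as `u v x y z` with `v y` nonempty in such a way that, for some nonterminal `A`,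
there are derivations `s ⇒ u A z`, `A ⇒ v A y` and `A ⇒ x`. -/
def IsPumpable (g : ContextFreeGrammar T) (s : List (Symbol T g.NT)) (w : List T) : Prop :=
  ∃ A u v x y z, w = u ++ v ++ x ++ y ++ z ∧ v ++ y ≠ [] ∧ DerivesAround g s u A z ∧
    DerivesAround g [.nonterminal A] v A y ∧ g.Derives [.nonterminal A] (x.map .terminal)

theorem IsPumpable.of_derivesAround (h : IsPumpable g [.nonterminal A] w)
    (hs : DerivesAround g s u A v) : IsPumpable g s (u ++ w ++ v) := by
  obtain ⟨B, u', v', x, y, z, rfl, hne, hB, hloop, hx⟩ := h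
  exact ⟨B, u ++ u', v', x, y, z ++ v, by simp, hne, hs.trans hB, hloop, hx⟩

theorem YieldsWithin.isPumpable {m : ℕ} (hm₁ : 1 ≤ m)
    (hm : ∀ r ∈ g.rules, r.output.length ≤ m) (h : YieldsWithin g F [.nonterminal A] w)
    (hw : m ^ F.card < w.length) : IsPumpable g [.nonterminal A] w := by
  classical
  induction F using Finset.strongInduction generalizing A w with
  | H F ih =>
    have hA : A ∈ F := h.mem
    obtain h | ⟨r, hr, rfl, u, x, v, rfl, hx, hloop⟩ := h.erase_or_exists_derivesAround A
    · exact absurd h.mem (Finset.notMem_erase A F)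
    obtain ⟨rfl, rfl⟩ | hne : u = [] ∧ v = [] ∨ u ++ v ≠ [] := by
      rw [ne_eq, List.append_eq_nil_iff]
      exact em _
    · have hlen : m ^ (F.erase r.input).card * r.output.length < x.length := calc
        _ ≤ m ^ (F.erase r.input).card * m := Nat.mul_le_mul_left _ (hm r hr)
        _ = m ^ F.card := by rw [← pow_succ, Finset.card_erase_add_one hA]
        _ < x.length := by simpa using hw
      obtain ⟨B, u, x, v, rfl, hB, hx, hlong, -⟩ :=
        hx.exists_derivesAround_length_le (Nat.one_le_pow _ _ hm₁) hm hlen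
      have hroot : DerivesAround g [.nonterminal r.input] u B v :=
        (derives_of_mem_rules hr).trans hB
      simpa using (ih _ (Finset.erase_ssubset hA) hx hlong).of_derivesAround hroot
    · exact ⟨r.input, [], u, x, v, [], by simp, hne, .refl _, hloop,
        (derives_of_mem_rules hr).trans hx.derives⟩

theorem exists_pumping_length_of_isContextFree {L : Language T} (hL : L.IsContextFree) :
    ∃ p, ∀ w ∈ L, p ≤ w.length → ∃ u v x y z, w = u ++ v ++ x ++ y ++ z ∧
      (v ++ x ++ y).length ≤ p ∧ v ++ y ≠ [] ∧
      ∀ n, u ++ (List.replicate n v).flatten ++ x ++ (List.replicate n y).flatten ++ z ∈ L := by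
  classical
  obtain ⟨g, rfl⟩ := hL
  let V := g.rules.image ContextFreeRule.input
  let m := g.rules.sup (fun r => r.output.length) + 2
  let K := m ^ V.card
  have hm : ∀ r ∈ g.rules, r.output.length ≤ m := fun r hr =>
    (Finset.le_sup (f := fun r : ContextFreeRule T g.NT => r.output.length) hr).trans
      (Nat.le_add_right _ 2)
  have hK : 1 ≤ K := Nat.one_le_pow _ _ (by omega)
  refine ⟨K * m, fun w hw hlen => ?_⟩
  have htree : YieldsWithin g V [.nonterminal g.initial] w :=
    .of_derives (fun r => Finset.mem_image_of_mem _) hw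
  have hKw : K * 1 < w.length := (Nat.mul_lt_mul_of_pos_left (by omega) hK).trans_le hlen
  obtain ⟨B, u₁, x₁, z₁, rfl, hB, hx₁, hlong, hshort⟩ :=
    htree.exists_derivesAround_length_le hK hm hKw
  obtain ⟨A, u₂, v, x, y, z₂, rfl, hne, hA, hloop, hx⟩ := hx₁.isPumpable (by omega) hm hlong
  refine ⟨u₁ ++ u₂, v, x, y, z₂ ++ z₁, by simp, ?_, hne, fun n => ?_⟩
  · simp only [List.length_append] at hshort ⊢
    omega
  · rw [ContextFreeGrammar.mem_language_iff]
    simpa using ((hB.trans hA).trans (hloop.iterate n)).derives_word hx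

end Derivations

theorem not_isContextFree_UPOW : ¬ UPOW.IsContextFree := by
  intro h
  obtain ⟨p, hp⟩ := exists_pumping_length_of_isContextFree h
  have hp2 : p < 2 ^ p := Nat.lt_two_pow_self
  obtain ⟨u, v, x, y, z, hw, hle, hne, hpump⟩ :=
    hp (List.replicate (2 ^ p) 0) ⟨p, rfl⟩ (by simpa using hp2.le)
  obtain ⟨k, hk⟩ := hpump 2
  have hlen := congrArg List.length hw
  have hlen' := congrArg List.length hk
  have hpos := List.length_pos_of_ne_nil hne
  simp only [List.length_append, List.length_replicate, List.length_flatten, List.map_replicate,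
    List.sum_replicate, smul_eq_mul] at hlen hlen' hle hpos
  have hlt : 2 ^ p < 2 ^ k := by omega
  have hlt' : 2 ^ k < 2 ^ (p + 1) := by rw [pow_succ]; omega
  rw [Nat.pow_lt_pow_iff_right one_lt_two] at hlt hlt'
  omega

namespace GAutomaton

variable {α : Type*} {G : Type*} [Group G]

section Runs

variable {M : GAutomaton α G} {p q : M.Q} {x : G} {w : List α}

theorem exists_stepsIn_iff {c d : M.Q × G × List α} :
    (∃ n, M.StepsIn n c d) ↔ Relation.ReflTransGen M.Step c d := by
  constructor
  · rintro ⟨n, h⟩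
    induction n generalizing c with
    | zero => exact h ▸ .refl
    | succ n ih =>
      obtain ⟨e, hce, hed⟩ := h
      exact (ih hed).head hce
  · intro h
    induction h using Relation.ReflTransGen.head_induction_on with
    | refl => exact ⟨0, rfl⟩
    | head hce _ ih =>
      obtain ⟨n, hn⟩ := ih
      exact ⟨n + 1, _, hce, hn⟩

theorem mem_lang_iff_s6 :
    w ∈ M.lang ↔ ∃ q ∈ M.acc, Relation.ReflTransGen M.Step (M.q0, 1, w) (q, 1, []) := by
  simp_rw [← exists_stepsIn_iff]
  constructor
  · rintro ⟨_, n, -, q, hq, h⟩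
    exact ⟨q, hq, n, h⟩
  · rintro ⟨q, hq, n, h⟩
    exact ⟨n, n, le_rfl, q, hq, h⟩

theorem step_epsilon (h : (p, none, q, x) ∈ M.δ) (y : G) (w : List α) :
    M.Step (p, y, w) (q, y * x, w) :=
  ⟨none, x, h, rfl, rfl⟩

theorem step_letter {a : α} (h : (p, some a, q, x) ∈ M.δ) (y : G) (w : List α) :
    M.Step (p, y, a :: w) (q, y * x, w) :=
  ⟨some a, x, h, rfl, rfl⟩

theorem reflTransGen_epsilon_loop (h : (q, none, q, x) ∈ M.δ) (n : ℕ) (y : G) (w : List α) :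
    Relation.ReflTransGen M.Step (q, y, w) (q, y * x ^ n, w) := by
  induction n with
  | zero => simpa using .refl
  | succ n ih =>
    rw [pow_succ, ← mul_assoc]
    exact ih.tail (step_epsilon h _ w)

theorem reflTransGen_letter_loop {a : α} (h : (q, some a, q, x) ∈ M.δ) (n : ℕ) (y : G)
    (w : List α) :
    Relation.ReflTransGen M.Step (q, y, List.replicate n a ++ w) (q, y * x ^ n, w) := by
  induction n generalizing y with
  | zero => simpa using .refl
  | succ n ih =>
    rw [pow_succ', ← mul_assoc]
    exact (ih (y * x)).head (step_letter h y _)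

end Runs

end GAutomaton

/-- The phases of a run of `conjPowAutomaton`: multiplying the register by powers of `b`, then by
powers of `b⁻¹`, and then reading the input. -/
inductive ConjPowState
  | ascend
  | descend
  | read

instance : Finite ConjPowState :=
  .of_surjective ![ConjPowState.ascend, .descend, .read] fun
    | .ascend => ⟨0, rfl⟩
    | .descend => ⟨1, rfl⟩
    | .read => ⟨2, rfl⟩

section ConjPow

variable {α : Type*} {G : Type*} [Group G] (a b : G) (s : α)

/-- An automaton which moves an element `bⁱ a b⁻ʲ` into its register without reading any input, and
then multiplies the register by `a⁻¹` for every letter `s` that it reads. -/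
def conjPowAutomaton : GAutomaton α G where
  Q := ConjPowState
  finQ := inferInstance
  q0 := .ascend
  acc := {.read}
  δ := {(.ascend, none, .ascend, b), (.ascend, none, .descend, a),
    (.descend, none, .descend, b⁻¹), (.descend, none, .read, 1), (.read, some s, .read, a⁻¹)}
  finδ := Set.toFinite _

/-- The register and the remaining input in each phase of a run of `conjPowAutomaton` on `w`, as an
invariant of configurations. -/
def ConjPowInvariant (w : List α) : ConjPowState × G × List α → Prop
  | (.ascend, x, u) => u = w ∧ ∃ i : ℕ, x = b ^ i
  | (.descend, x, u) => u = w ∧ ∃ i j : ℕ, x = b ^ i * a * b⁻¹ ^ j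
  | (.read, x, u) => ∃ i j m : ℕ, List.replicate m s ++ u = w ∧ x = b ^ i * a * b⁻¹ ^ j * a⁻¹ ^ m

variable {a b s}

theorem ConjPowInvariant.step {w : List α} {c d : ConjPowState × G × List α}
    (hc : ConjPowInvariant a b s w c) (h : (conjPowAutomaton a b s).Step c d) :
    ConjPowInvariant a b s w d := by
  obtain ⟨p, x, u⟩ := c
  obtain ⟨q, _, v⟩ := d
  obtain ⟨σ, m, hδ, rfl, hσ⟩ := h
  obtain ⟨rfl, rfl, rfl, rfl⟩ | ⟨rfl, rfl, rfl, rfl⟩ | ⟨rfl, rfl, rfl, rfl⟩ |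
    ⟨rfl, rfl, rfl, rfl⟩ | ⟨rfl, rfl, rfl, rfl⟩ := hδ <;> dsimp only at hσ <;> subst hσ
  · obtain ⟨hu, i, rfl⟩ := hc
    exact ⟨hu, i + 1, (pow_succ b i).symm⟩
  · obtain ⟨hu, i, rfl⟩ := hc
    exact ⟨hu, i, 0, by simp⟩
  · obtain ⟨hu, i, j, rfl⟩ := hc
    exact ⟨hu, i, j + 1, by simp only [pow_succ, mul_assoc]⟩
  · obtain ⟨hu, i, j, rfl⟩ := hc
    exact ⟨i, j, 0, by simpa using hu, by simp⟩
  · obtain ⟨i, j, m, hu, rfl⟩ := hc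
    exact ⟨i, j, m + 1, by simpa [List.replicate_succ'] using hu,
      by simp only [pow_succ, mul_assoc]⟩

theorem ConjPowInvariant.of_reflTransGen {w : List α} {c : ConjPowState × G × List α}
    (h : Relation.ReflTransGen (conjPowAutomaton a b s).Step (.ascend, 1, w) c) :
    ConjPowInvariant a b s w c := by
  induction h with
  | refl => exact ⟨rfl, 0, (pow_zero b).symm⟩
  | tail _ hstep ih => exact ih.step hstep

theorem reflTransGen_conjPowAutomaton (a b : G) (s : α) (i j m : ℕ) :
    Relation.ReflTransGen (conjPowAutomaton a b s).Step (.ascend, 1, List.replicate m s)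
      (.read, b ^ i * a * b⁻¹ ^ j * a⁻¹ ^ m, []) := by
  let M := conjPowAutomaton a b s
  let w := List.replicate m s
  let x := b ^ i * a * b⁻¹ ^ j
  have ascend : Relation.ReflTransGen M.Step (.ascend, 1, w) (.ascend, b ^ i, w) := by
    simpa using GAutomaton.reflTransGen_epsilon_loop (M := M) (q := .ascend) (x := b)
      (.inl rfl) i 1 w
  have turn : M.Step (.ascend, b ^ i, w) (.descend, b ^ i * a, w) :=
    GAutomaton.step_epsilon (by exact .inr (.inl rfl)) _ w
  have descend : Relation.ReflTransGen M.Step (.descend, b ^ i * a, w) (.descend, x, w) :=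
    GAutomaton.reflTransGen_epsilon_loop (by exact .inr (.inr (.inl rfl))) j _ w
  have start_reading : M.Step (.descend, x, w) (.read, x, w) := by
    simpa using GAutomaton.step_epsilon (M := M) (p := .descend) (q := .read) (x := 1)
      (.inr (.inr (.inr (.inl rfl)))) x w
  have read : Relation.ReflTransGen M.Step (.read, x, w) (.read, x * a⁻¹ ^ m, []) := by
    simpa [w] using GAutomaton.reflTransGen_letter_loop (M := M) (q := .read) (x := a⁻¹) (a := s)
      (.inr (.inr (.inr (.inr rfl)))) m x []
  exact (((ascend.tail turn).trans descend).tail start_reading).trans read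

theorem mem_lang_conjPowAutomaton {w : List α} :
    w ∈ (conjPowAutomaton a b s).lang ↔
      ∃ i j m : ℕ, w = List.replicate m s ∧ b ^ i * a = a ^ m * b ^ j := by
  have register_eq_one (i j m : ℕ) :
      b ^ i * a * b⁻¹ ^ j * a⁻¹ ^ m = 1 ↔ b ^ i * a = a ^ m * b ^ j := by
    rw [inv_pow, inv_pow, mul_inv_eq_one, mul_inv_eq_iff_eq_mul]
  rw [GAutomaton.mem_lang_iff_s6]
  constructor
  · rintro ⟨_, rfl, hrun⟩
    obtain ⟨i, j, m, hw, hone⟩ := ConjPowInvariant.of_reflTransGen hrun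
    exact ⟨i, j, m, by simpa using hw.symm, (register_eq_one i j m).1 hone.symm⟩
  · rintro ⟨i, j, m, rfl, hrel⟩
    have hrun := reflTransGen_conjPowAutomaton a b s i j m
    rw [(register_eq_one i j m).2 hrel] at hrun
    exact ⟨.read, rfl, hrun⟩

end ConjPow

theorem coe_BSmatA_pow (n : ℕ) :
    (↑(BSmatA ^ n) : Matrix (Fin 2) (Fin 2) ℚ) = !![1, 0; -(n : ℚ), 1] := by
  induction n with
  | zero => simp [Matrix.one_fin_two]
  | succ n ih =>
    rw [pow_succ, Units.val_mul, ih]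
    simp [BSmatA, Matrix.GeneralLinearGroup.mkOfDetNeZero, add_comm]

theorem coe_BSmatB_pow (n : ℕ) :
    (↑(BSmatB ^ n) : Matrix (Fin 2) (Fin 2) ℚ) = !![(1 / 2) ^ n, 0; 0, 1] := by
  induction n with
  | zero => simp [Matrix.one_fin_two]
  | succ n ih =>
    rw [pow_succ, Units.val_mul, ih]
    simp [BSmatB, Matrix.GeneralLinearGroup.mkOfDetNeZero, pow_succ]

theorem BSmatB_pow_mul_BSmatA_eq_iff {i j m : ℕ} :
    BSmatB ^ i * BSmatA = BSmatA ^ m * BSmatB ^ j ↔ i = j ∧ m = 2 ^ i := by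
  have hentries : BSmatB ^ i * BSmatA = BSmatA ^ m * BSmatB ^ j ↔
      ((1 / 2 : ℚ)) ^ i = (1 / 2) ^ j ∧ (1 : ℚ) = m * (1 / 2) ^ j := by
    rw [← Units.val_inj, Units.val_mul, Units.val_mul, ← pow_one BSmatA, ← pow_mul,
      coe_BSmatB_pow, coe_BSmatB_pow, coe_BSmatA_pow, coe_BSmatA_pow, one_mul]
    simp
  rw [hentries, pow_right_inj₀ (by norm_num) (by norm_num), and_congr_right_iff]
  rintro rfl
  rw [one_div, inv_pow, eq_comm, mul_inv_eq_one₀ (by positivity)]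
  exact_mod_cast Iff.rfl

theorem gRecognizable_GBS_UPOW : GRecognizable GBS UPOW := by
  let A : GBS := ⟨BSmatA, Subgroup.subset_closure (by simp)⟩
  let B : GBS := ⟨BSmatB, Subgroup.subset_closure (by simp)⟩
  have hrel (i j m : ℕ) : B ^ i * A = A ^ m * B ^ j ↔ i = j ∧ m = 2 ^ i := by
    rw [← BSmatB_pow_mul_BSmatA_eq_iff]
    exact Subtype.ext_iff
  refine ⟨conjPowAutomaton A B 0, Set.ext fun w => mem_lang_conjPowAutomaton.trans ?_⟩
  constructor
  · rintro ⟨i, j, m, rfl, h⟩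
    exact ⟨i, by rw [((hrel i j m).1 h).2]⟩
  · rintro ⟨n, rfl⟩
    exact ⟨n, n, 2 ^ n, rfl, (hrel n n _).2 ⟨rfl, rfl⟩⟩

/-- `UPOW` is recognized by a `G_BS`-automaton; since `UPOW` is not
context-free, `𝔏(G_BS)` is not contained in the class of context-free languages. -/
theorem GBS_not_subset_CF :
    GRecognizable GBS UPOW ∧ ¬ UPOW.IsContextFree ∧
    ¬ (∀ (α : Type) [Fintype α] (L : Language α),
        GRecognizable GBS L → L.IsContextFree) :=
  ⟨gRecognizable_GBS_UPOW, not_isContextFree_UPOW,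
    fun h => not_isContextFree_UPOW (h (Fin 1) UPOW gRecognizable_GBS_UPOW)⟩
end

section
/- Let G be a finitely generated group with finite generating set X. Then for every n ∈ ℕ, U_{W(G,X)}(n) ≥ g_G^X(⌊n/2⌋): there is a uniformly n-dissimilar set for the word problem language W(G,X) of cardinality at least the number of group elements of word length at most ⌊n/2⌋. -/
/-- `S` is a set of pairwise `n`-dissimilar strings for `L`: all members have length
`≤ n`, and any two distinct members are `n`-dissimilar. -/
def PairwiseDissimilar {α : Type*} (L : Language α) (n : ℕ) (S : Finset (List α)) : Prop :=
  (∀ w ∈ S, w.length ≤ n) ∧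
    ∀ w ∈ S, ∀ w' ∈ S, w ≠ w' →
      ∃ v : List α, (w ++ v).length ≤ n ∧ (w' ++ v).length ≤ n ∧
        ((w ++ v) ∈ L ↔ (w' ++ v) ∉ L)

/-- `A_L(n)` : the maximum cardinality of a set of pairwise `n`-dissimilar strings. -/
noncomputable def dissimA {α : Type*} (L : Language α) (n : ℕ) : ℕ :=
  sSup {k | ∃ S : Finset (List α), PairwiseDissimilar L n S ∧ S.card = k}

/-- `S` is a uniformly `n`-dissimilar set of strings for `L`. -/
def UniformlyDissimilar {α : Type*} (L : Language α) (n : ℕ) (S : Finset (List α)) : Prop :=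
  ∀ w ∈ S, ∃ v : List α, (w ++ v).length ≤ n ∧ (w ++ v) ∈ L ∧
    ∀ w' ∈ S, w' ≠ w → (w' ++ v).length ≤ n ∧ (w' ++ v) ∉ L

/-- `U_L(n)` : the maximum cardinality of a uniformly `n`-dissimilar set for `L`. -/
noncomputable def dissimU {α : Type*} (L : Language α) (n : ℕ) : ℕ :=
  sSup {k | ∃ S : Finset (List α), UniformlyDissimilar L n S ∧ S.card = k}

/-- Evaluation in `G` of a word over the alphabet `X ∪ X⁻¹`, encoded as `↥X × Bool`
(`(x, false)` stands for the generator `x` and `(x, true)` for its inverse `x⁻¹`). -/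
def wordEval {G : Type*} [Group G] (X : Finset G) (w : List (↥X × Bool)) : G :=
  (w.map fun p => if p.2 then (p.1 : G)⁻¹ else (p.1 : G)).prod

/-- The word problem language `W(G,X)` over the alphabet `X ∪ X⁻¹`: all words whose
product in `G` is the identity. -/
def wordProblem {G : Type*} [Group G] (X : Finset G) : Language (↥X × Bool) :=
  {w | wordEval X w = 1}

/-- The growth function `g_G^X(n)` of `G` with respect to `X`: the number of group
elements of word length at most `n`. -/
noncomputable def growthFn {G : Type*} [Group G] (X : Finset G) (n : ℕ) : ℕ :=
  Nat.card {g : G // ∃ w : List (↥X × Bool), w.length ≤ n ∧ wordEval X w = g}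

/-!
Choose for each group element of length at most `n / 2` one word of at most that length
representing it. The formal inverse of a chosen word `w`, which is as long as `w`, completes `w` to
a word for the identity; it completes no other chosen word, since inverses in a group are unique.
-/

namespace UniformlyDissimilar

variable {α : Type*} {L : Language α} {n : ℕ} {S : Finset (List α)}

theorem length_le (hS : UniformlyDissimilar L n S) {w : List α} (hw : w ∈ S) : w.length ≤ n := by
  obtain ⟨v, hwv, -⟩ := hS w hw
  exact (List.prefix_append w v).length_le.trans hwv

theorem card_le_dissimU [Finite α] (hS : UniformlyDissimilar L n S) : S.card ≤ dissimU L n := by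
  have hfin : {w : List α | w.length ≤ n}.Finite := List.finite_length_le α n
  refine le_csSup ⟨hfin.toFinset.card, ?_⟩ ⟨S, hS, rfl⟩
  rintro _ ⟨T, hT, rfl⟩
  exact Finset.card_le_card fun w hw => hfin.mem_toFinset.2 (hT.length_le hw)

end UniformlyDissimilar

section WordProblem

variable {G : Type*} [Group G] (X : Finset G)

/-- `FreeGroup` marks a generator by `true` and its inverse by `false`, the opposite of `wordEval`;
hence the inverse on the right-hand side. -/
theorem wordEval_eq_lift (w : List (↥X × Bool)) :
    wordEval X w = FreeGroup.lift (fun x : ↥X => (x : G)⁻¹) (FreeGroup.mk w) := by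
  simp only [wordEval, FreeGroup.lift_mk, inv_inv, Bool.cond_eq_ite]

theorem wordEval_append (u v : List (↥X × Bool)) :
    wordEval X (u ++ v) = wordEval X u * wordEval X v := by
  simp only [wordEval_eq_lift, ← FreeGroup.mul_mk, map_mul]

theorem wordEval_invRev (w : List (↥X × Bool)) :
    wordEval X (FreeGroup.invRev w) = (wordEval X w)⁻¹ := by
  simp only [wordEval_eq_lift, ← FreeGroup.inv_mk, map_inv]

variable {X}

theorem append_invRev_mem_wordProblem_iff {u w : List (↥X × Bool)} :
    u ++ FreeGroup.invRev w ∈ wordProblem X ↔ wordEval X u = wordEval X w := by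
  change wordEval X (u ++ FreeGroup.invRev w) = 1 ↔ _
  rw [wordEval_append, wordEval_invRev, mul_inv_eq_one]

theorem uniformlyDissimilar_wordProblem_of_injOn {m n : ℕ} (hmn : 2 * m ≤ n)
    {S : Finset (List (↥X × Bool))} (hlen : ∀ w ∈ S, w.length ≤ m)
    (hinj : Set.InjOn (wordEval X) S) : UniformlyDissimilar (wordProblem X) n S := by
  intro w hw
  have hlen_append : ∀ u ∈ S, (u ++ FreeGroup.invRev w).length ≤ n := by
    intro u hu
    have := hlen u hu
    have := hlen w hw
    rw [List.length_append, FreeGroup.invRev_length]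
    lia
  refine ⟨FreeGroup.invRev w, hlen_append w hw, append_invRev_mem_wordProblem_iff.2 rfl,
    fun u hu hne => ⟨hlen_append u hu, fun hmem => hne ?_⟩⟩
  exact hinj hu hw (append_invRev_mem_wordProblem_iff.1 hmem)

variable (X)

theorem growthFn_eq_ncard_image (m : ℕ) :
    growthFn X m = (wordEval X '' {w | w.length ≤ m}).ncard :=
  rfl

theorem exists_finset_injOn_wordEval_card_eq_growthFn (m : ℕ) :
    ∃ S : Finset (List (↥X × Bool)),
      (∀ w ∈ S, w.length ≤ m) ∧ Set.InjOn (wordEval X) S ∧ S.card = growthFn X m := by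
  obtain ⟨S, hlen, hbij⟩ := Set.exists_subset_bijOn {w | w.length ≤ m} (wordEval X)
  lift S to Finset (List (↥X × Bool)) using (List.finite_length_le _ m).subset hlen
  refine ⟨S, fun w hw => hlen hw, hbij.injOn, ?_⟩
  rw [growthFn_eq_ncard_image, ← hbij.image_eq, hbij.injOn.ncard_image, Set.ncard_coe_finset]

theorem dissimU_wordProblem_ge_growth_general (n : ℕ) :
    growthFn X (n / 2) ≤ dissimU (wordProblem X) n := by
  obtain ⟨S, hlen, hinj, hcard⟩ := exists_finset_injOn_wordEval_card_eq_growthFn X (n / 2)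
  rw [← hcard]
  exact (uniformlyDissimilar_wordProblem_of_injOn (Nat.mul_div_le n 2) hlen hinj).card_le_dissimU

end WordProblem

/-- For a finitely generated group `G` with finite generating set `X`,
`U_{W(G,X)}(n) ≥ g_G^X(⌊n/2⌋)` for every `n`. -/
theorem dissimU_wordProblem_ge_growth {G : Type*} [Group G] (X : Finset G)
    (hX : Subgroup.closure (X : Set G) = ⊤) (n : ℕ) :
    growthFn X (n / 2) ≤ dissimU (wordProblem X) n :=
  dissimU_wordProblem_ge_growth_general X n
end

section
/- Let G and H be finitely generated groups with finite generating sets X and Y, such that the growth function g_G^X(n) is bounded above by a polynomial in n, while g_H^Y(n) ≥ bⁿ for some real b > 1 and all sufficiently large n. Then for every polynomial t(n), 𝔏(H) is not contained in 𝔏(G)^w_{t(n)}: the word problem W(H,Y) belongs to 𝔏(H) but is not recognized by any weakly t(n) time-bounded G-automaton. -/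
/-!
For `h : H` of word length at most `n` choose a word `u` of length at most `n` representing `h`. The
words `u u⁻¹` lie in the word problem, whereas `u v⁻¹` does not when `u` and `v` represent different
elements, so after reading the prefixes `u` an automaton must be in pairwise different pairs
`(state, register)`. Such a pair is reached in at most `t (2 * n)` steps, hence its register lies in
a ball of `G` of radius linear in `t (2 * n)`. Therefore `g_H(n) ≤ |Q| * g_G(C * t (2 * n))`, which
is polynomially bounded when `g_G` and `t` are.
-/

section WordBall

variable {G : Type*} [Group G] (X : Finset G)

/-- The ball of radius `n` around `1` in the Cayley graph of `X`; its cardinality is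
`growthFn X n`. -/
def wordBall (n : ℕ) : Set G := {g | ∃ w : List (↥X × Bool), w.length ≤ n ∧ wordEval X w = g}

theorem range_wordEval : Set.range (wordEval X) = Subgroup.closure (X : Set G) := by
  have hrange : Set.range (fun x : ↥X => (x : G)⁻¹) = (X : Set G)⁻¹ := by
    ext g
    simp [inv_eq_iff_eq_inv]
  rw [funext (wordEval_eq_lift X), ← Subgroup.closure_inv, ← hrange,
    ← FreeGroup.range_lift_eq_closure, MonoidHom.coe_range]
  exact Quot.mk_surjective.range_comp _

theorem finite_wordBall (n : ℕ) : (wordBall X n).Finite :=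
  (List.finite_length_le (↥X × Bool) n).image (wordEval X)

variable {X}

theorem one_mem_wordBall (n : ℕ) : (1 : G) ∈ wordBall X n := ⟨[], n.zero_le, rfl⟩

theorem wordBall_mono {m n : ℕ} (hmn : m ≤ n) : wordBall X m ⊆ wordBall X n :=
  fun _ ⟨w, hw, hg⟩ => ⟨w, hw.trans hmn, hg⟩

theorem mul_mem_wordBall {m n : ℕ} {g h : G} (hg : g ∈ wordBall X m) (hh : h ∈ wordBall X n) :
    g * h ∈ wordBall X (m + n) := by
  obtain ⟨u, hu, rfl⟩ := hg
  obtain ⟨v, hv, rfl⟩ := hh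
  exact ⟨u ++ v, by simpa using add_le_add hu hv, wordEval_append X u v⟩

theorem exists_subset_wordBall {S : Set G} (hS : S.Finite)
    (hSX : S ⊆ Subgroup.closure (X : Set G)) : ∃ n, S ⊆ wordBall X n := by
  have hrepr (g : G) (hg : g ∈ S) : ∃ w, wordEval X w = g := by
    rw [← Set.mem_range, range_wordEval]
    exact hSX hg
  choose! word hword using hrepr
  obtain ⟨n, hn⟩ := (hS.image fun g => (word g).length).bddAbove
  exact ⟨n, fun g hg => ⟨word g, hn ⟨g, hg, rfl⟩, hword g hg⟩⟩

end WordBall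

/-- A fooling family for `L`: prefixes `u i` and suffixes `v i` such that `u i ++ v j` lies in `L`
exactly when `i = j`. Its size bounds from below the number of configurations in which an automaton
for `L` can be after reading some prefix `u i`. -/
def IsFoolingFamily {α ι : Type*} (L : Language α) (u v : ι → List α) : Prop :=
  ∀ i j, u i ++ v j ∈ L ↔ i = j

namespace GAutomaton

variable {α G : Type*} [Group G] {M : GAutomaton α G}

section Computations

variable {q r : M.Q} {x y : G} {u v : List α} {i j k : ℕ}

theorem Step.append_right (h : M.Step (q, x, u) (r, y, v)) (w : List α) :
    M.Step (q, x, u ++ w) (r, y, v ++ w) := by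
  obtain ⟨_ | a, m, hδ, hm, hread⟩ := h
  · exact ⟨none, m, hδ, hm, congrArg (· ++ w) hread⟩
  · exact ⟨some a, m, hδ, hm, congrArg (· ++ w) hread⟩

theorem Step.exists_of_cons_append {a : α} {w : List α}
    (h : M.Step (q, x, a :: u ++ v) (r, y, w)) :
    ∃ u', w = u' ++ v ∧ M.Step (q, x, a :: u) (r, y, u') := by
  obtain ⟨_ | b, m, hδ, hm, hread⟩ := h
  · exact ⟨a :: u, hread, none, m, hδ, hm, rfl⟩
  · obtain ⟨rfl, rfl⟩ := List.cons.inj hread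
    exact ⟨u, rfl, some a, m, hδ, hm, rfl⟩

theorem StepsIn.append_right (h : M.StepsIn k (q, x, u) (r, y, v)) (w : List α) :
    M.StepsIn k (q, x, u ++ w) (r, y, v ++ w) := by
  induction k generalizing q x u with
  | zero =>
    cases h
    rfl
  | succ k ih =>
    obtain ⟨⟨s, z, u'⟩, hstep, hrest⟩ := h
    exact ⟨_, hstep.append_right w, ih hrest⟩

theorem StepsIn.trans {a b c : M.Q × G × List α} (hab : M.StepsIn i a b) (hbc : M.StepsIn j b c) :
    M.StepsIn (i + j) a c := by
  induction i generalizing a with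
  | zero =>
    cases hab
    rwa [Nat.zero_add]
  | succ i ih =>
    obtain ⟨d, had, hdb⟩ := hab
    rw [Nat.add_right_comm]
    exact ⟨d, had, ih hdb⟩

theorem StepsIn.exists_split (h : M.StepsIn k (q, x, u ++ v) (r, y, [])) :
    ∃ i j s z, i + j = k ∧ M.StepsIn i (q, x, u) (s, z, []) ∧ M.StepsIn j (s, z, v) (r, y, []) := by
  induction k generalizing q x u with
  | zero =>
    cases u <;> cases h
    exact ⟨0, 0, _, _, rfl, rfl, rfl⟩
  | succ k ih =>
    rcases u with _ | ⟨a, u⟩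
    · exact ⟨0, k + 1, q, x, k.succ.zero_add, rfl, h⟩
    · obtain ⟨⟨q', x', w⟩, hstep, hrest⟩ := h
      obtain ⟨u', rfl, hstep'⟩ := hstep.exists_of_cons_append
      obtain ⟨i, j, s, z, rfl, hi, hj⟩ := ih hrest
      exact ⟨i + 1, j, s, z, Nat.add_right_comm .., ⟨_, hstep', hi⟩, hj⟩

theorem StepsIn.inv_mul_register_mem_wordBall {X : Finset G} {C : ℕ}
    (hδ : ∀ tr ∈ M.δ, tr.2.2.2 ∈ wordBall X C) (h : M.StepsIn k (q, x, u) (r, y, v)) :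
    x⁻¹ * y ∈ wordBall X (k * C) := by
  induction k generalizing q x u with
  | zero =>
    cases h
    simpa using one_mem_wordBall 0
  | succ k ih =>
    obtain ⟨⟨q', x', u'⟩, ⟨σ, m, hm, hx', -⟩, hrest⟩ := h
    have hfactor : x⁻¹ * y = m * (x'⁻¹ * y) := by
      rw [show x' = x * m from hx']
      group
    rw [hfactor, Nat.succ_mul, Nat.add_comm]
    exact mul_mem_wordBall (hδ _ hm) (ih hrest)

end Computations

section Acceptance

/-- `M.AcceptsFrom s z v` : started in state `s` with register `z`, `M` can accept the input `v`. -/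
def AcceptsFrom (M : GAutomaton α G) (s : M.Q) (z : G) (v : List α) : Prop :=
  ∃ j, ∃ q ∈ M.acc, M.StepsIn j (s, z, v) (q, 1, [])

variable {u v : List α}

theorem AcceptsIn.mono {s t : ℕ} (h : M.AcceptsIn u s) (hst : s ≤ t) : M.AcceptsIn u t :=
  let ⟨k, hk, hacc⟩ := h
  ⟨k, hk.trans hst, hacc⟩

theorem AcceptsIn.exists_midpoint {T : ℕ} (h : M.AcceptsIn (u ++ v) T) :
    ∃ i ≤ T, ∃ s z, M.StepsIn i (M.q0, 1, u) (s, z, []) ∧ M.AcceptsFrom s z v := by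
  obtain ⟨k, hk, q, hq, hsteps⟩ := h
  obtain ⟨i, j, s, z, rfl, hi, hj⟩ := hsteps.exists_split
  exact ⟨i, (Nat.le_add_right i j).trans hk, s, z, hi, j, q, hq, hj⟩

theorem append_mem_lang {i : ℕ} {s : M.Q} {z : G} (hu : M.StepsIn i (M.q0, 1, u) (s, z, []))
    (hv : M.AcceptsFrom s z v) : u ++ v ∈ M.lang := by
  obtain ⟨j, q, hq, hj⟩ := hv
  exact ⟨i + j, i + j, le_rfl, q, hq, (hu.append_right v).trans hj⟩

end Acceptance

theorem card_le_of_isFoolingFamily {ι : Type*} {u v : ι → List α}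
    (hfool : IsFoolingFamily M.lang u v) {X : Finset G} {C T : ℕ}
    (hδ : ∀ tr ∈ M.δ, tr.2.2.2 ∈ wordBall X C) (hacc : ∀ i, M.AcceptsIn (u i ++ v i) T) :
    Nat.card ι ≤ Nat.card M.Q * growthFn X (T * C) := by
  choose k hk s z hu hv using fun i => (hacc i).exists_midpoint
  have hball (i : ι) : z i ∈ wordBall X (T * C) :=
    wordBall_mono (Nat.mul_le_mul_right C (hk i)) <| by
      simpa using (hu i).inv_mul_register_mem_wordBall hδ
  let mid (i : ι) : M.Q × ↥(wordBall X (T * C)) := (s i, ⟨z i, hball i⟩)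
  have hmid : Function.Injective mid := fun i j hij => by
    obtain ⟨hs, hz⟩ : s i = s j ∧ z i = z j := by simpa [mid] using hij
    have hvj : M.AcceptsFrom (s i) (z i) (v j) := by
      rw [hs, hz]
      exact hv j
    exact (hfool i j).1 (append_mem_lang (hu i) hvj)
  have := M.finQ
  have := (finite_wordBall X (T * C)).to_subtype
  exact (Nat.card_le_card_of_injective mid hmid).trans_eq (Nat.card_prod _ _)

section KernelAutomaton

variable [Finite α] (f : α → G)

/-- The one-state automaton multiplying its register by `f a` whenever it reads the letter `a`; it
recognizes the kernel of the evaluation of words induced by `f`. -/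
def kernelAutomaton : GAutomaton α G where
  Q := Unit
  finQ := inferInstance
  q0 := ()
  acc := Set.univ
  δ := Set.range fun a => ((), some a, (), f a)
  finδ := Set.finite_range _

variable {f}

theorem step_kernelAutomaton_iff {q r : Unit} {x y : G} {u v : List α} :
    (kernelAutomaton f).Step (q, x, u) (r, y, v) ↔ ∃ a, u = a :: v ∧ y = x * f a := by
  constructor
  · rintro ⟨_, _, ⟨a, ha⟩, hy, hread⟩
    cases ha
    exact ⟨a, hread, hy⟩
  · rintro ⟨a, rfl, rfl⟩
    exact ⟨some a, f a, ⟨a, rfl⟩, rfl, rfl⟩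

theorem stepsIn_kernelAutomaton_iff {k : ℕ} {q r : Unit} {x y : G} {w : List α} :
    (kernelAutomaton f).StepsIn k (q, x, w) (r, y, []) ↔
      k = w.length ∧ y = x * (w.map f).prod := by
  induction k generalizing q x w with
  | zero =>
    constructor
    · intro h
      cases h
      simp
    · rintro ⟨hw, rfl⟩
      obtain rfl := List.eq_nil_of_length_eq_zero hw.symm
      simp [StepsIn]
  | succ k ih =>
    have hsucc : (kernelAutomaton f).StepsIn (k + 1) (q, x, w) (r, y, []) ↔
        ∃ a w', w = a :: w' ∧ k = w'.length ∧ y = x * f a * (w'.map f).prod := by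
      constructor
      · rintro ⟨⟨s, z, w'⟩, hstep, hrest⟩
        obtain ⟨a, rfl, rfl⟩ := step_kernelAutomaton_iff.1 hstep
        exact ⟨a, w', rfl, ih.1 hrest⟩
      · rintro ⟨a, w', rfl, hrest⟩
        exact ⟨((), x * f a, w'), step_kernelAutomaton_iff.2 ⟨a, rfl, rfl⟩, ih.2 hrest⟩
    rw [hsucc]
    cases w <;> simp [mul_assoc]

theorem lang_kernelAutomaton : (kernelAutomaton f).lang = {w | (w.map f).prod = 1} := by
  ext w
  constructor
  · rintro ⟨_, k, -, q, -, hsteps⟩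
    have hprod := (stepsIn_kernelAutomaton_iff.1 hsteps).2
    rw [one_mul] at hprod
    exact hprod.symm
  · intro hw
    exact ⟨w.length, w.length, le_rfl, (), trivial,
      stepsIn_kernelAutomaton_iff.2 ⟨rfl, by rw [one_mul, show (w.map f).prod = 1 from hw]⟩⟩

end KernelAutomaton

end GAutomaton

section PolynomialBounds

open Filter Asymptotics

/-- The function `f` is bounded above by a polynomial. Natural coefficients are no restriction for
functions on `ℕ`, and they make the bounding polynomial monotone. -/
def IsPolyBounded (f : ℕ → ℕ) : Prop := ∃ p : Polynomial ℕ, ∀ n, f n ≤ p.eval n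

theorem monotone_polynomial_eval_nat (p : Polynomial ℕ) : Monotone fun n : ℕ => p.eval n := by
  intro m n hmn
  simp only [Polynomial.eval_eq_sum_range]
  gcongr

theorem IsPolyBounded.comp {f g : ℕ → ℕ} (hf : IsPolyBounded f) (hg : IsPolyBounded g) :
    IsPolyBounded fun n => f (g n) := by
  obtain ⟨p, hp⟩ := hf
  obtain ⟨q, hq⟩ := hg
  refine ⟨p.comp q, fun n => ?_⟩
  rw [Polynomial.eval_comp]
  exact (hp _).trans (monotone_polynomial_eval_nat p (hq n))

theorem isLittleO_polynomial_eval_pow {R : Type*} [NormedRing R] (p : Polynomial R) {b : ℝ}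
    (hb : 1 < b) : (fun n : ℕ => p.eval (n : R)) =o[atTop] fun n => b ^ n := by
  simp only [Polynomial.eval_eq_sum_range]
  exact IsLittleO.fun_sum fun i _ =>
    (isLittleO_pow_const_const_pow_of_one_lt i hb).const_mul_left _

theorem not_isPolyBounded_of_frequently_pow_le {f : ℕ → ℕ} {b : ℝ} (hb : 1 < b)
    (hf : ∃ᶠ n : ℕ in atTop, b ^ n ≤ (f n : ℝ)) : ¬ IsPolyBounded f := by
  rintro ⟨p, hp⟩
  have hsmall := (isLittleO_polynomial_eval_pow (p.map (Nat.castRingHom ℝ)) hb).def one_half_pos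
  obtain ⟨n, hbf, hpb⟩ := (hf.and_eventually hsmall).exists
  have hpow : 0 < b ^ n := pow_pos (one_pos.trans hb) n
  have hfp : (f n : ℝ) ≤ (p.eval n : ℕ) := by exact_mod_cast hp n
  rw [Polynomial.eval_natCast_map, Nat.coe_castRingHom, Nat.cast_id, RCLike.norm_natCast,
    Real.norm_of_nonneg hpow.le] at hpb
  linarith

end PolynomialBounds

theorem GRecognizableInTime.mono {G : Type*} [Group G] {α : Type*} {L : Language α} {s t : ℕ → ℕ}
    (h : GRecognizableInTime G L s) (hst : s ≤ t) : GRecognizableInTime G L t :=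
  let ⟨M, hM, hacc⟩ := h
  ⟨M, hM, fun w hw => (hacc w hw).mono (hst _)⟩

section WordProblem

variable {G H : Type*} [Group G] [Group H] (Y : Finset H)

theorem gRecognizable_wordProblem : GRecognizable H (wordProblem Y) :=
  ⟨GAutomaton.kernelAutomaton _, GAutomaton.lang_kernelAutomaton⟩

theorem isFoolingFamily_wordProblem {S : Set H} {word : ↥S → List (↥Y × Bool)}
    (hword : ∀ h, wordEval Y (word h) = h) :
    IsFoolingFamily (wordProblem Y) word fun h => FreeGroup.invRev (word h) := by
  intro g h
  change wordEval Y _ = 1 ↔ _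
  rw [wordEval_append, wordEval_invRev, hword, hword, mul_inv_eq_one, Subtype.coe_inj]

theorem growthFn_le_of_gRecognizableInTime {X : Finset G}
    (hX : Subgroup.closure (X : Set G) = ⊤) {t : ℕ → ℕ} (ht : Monotone t)
    (hrec : GRecognizableInTime G (wordProblem Y) t) :
    ∃ K C : ℕ, ∀ n, growthFn Y n ≤ K * growthFn X (t (2 * n) * C) := by
  obtain ⟨M, hM, hacc⟩ := hrec
  obtain ⟨C, hC⟩ := exists_subset_wordBall (M.finδ.image fun tr => tr.2.2.2)
    (X := X) (by simp [hX])
  refine ⟨Nat.card M.Q, C, fun n => ?_⟩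
  choose word hlen hword using fun h : ↥(wordBall Y n) => h.2
  have hfool := isFoolingFamily_wordProblem Y hword
  refine GAutomaton.card_le_of_isFoolingFamily (hM ▸ hfool) (fun tr htr => hC ⟨tr, htr, rfl⟩)
    fun h => (hacc _ ((hfool h h).2 rfl)).mono (ht ?_)
  rw [List.length_append, FreeGroup.invRev_length, ← two_mul]
  exact Nat.mul_le_mul_left 2 (hlen h)

variable {Y}

theorem isPolyBounded_growthFn_of_gRecognizableInTime {X : Finset G}
    (hX : Subgroup.closure (X : Set G) = ⊤) (hpoly : IsPolyBounded (growthFn X)) {t : ℕ → ℕ}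
    (ht : IsPolyBounded t) (hrec : GRecognizableInTime G (wordProblem Y) t) :
    IsPolyBounded (growthFn Y) := by
  obtain ⟨q, hq⟩ := ht
  obtain ⟨K, C, hgrowth⟩ :=
    growthFn_le_of_gRecognizableInTime Y hX (monotone_polynomial_eval_nat q) (hrec.mono hq)
  have hradius : IsPolyBounded fun n => q.eval (2 * n) * C :=
    ⟨q.comp (2 * Polynomial.X) * Polynomial.C C, fun n => by simp⟩
  obtain ⟨p, hp⟩ := hpoly.comp hradius
  refine ⟨Polynomial.C K * p, fun n => ?_⟩
  rw [Polynomial.eval_mul, Polynomial.eval_C]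
  exact (hgrowth n).trans (Nat.mul_le_mul_left K (hp n))

end WordProblem

theorem poly_growth_cannot_simulate_exp_growth_general
    {G : Type*} [Group G] (X : Finset G) (hX : Subgroup.closure (X : Set G) = ⊤)
    {H : Type*} [Group H] (Y : Finset H)
    (hpoly : IsPolyBounded (growthFn X)) (hsuper : ¬ IsPolyBounded (growthFn Y))
    {t : ℕ → ℕ} (ht : IsPolyBounded t) :
    GRecognizable H (wordProblem Y) ∧ ¬ GRecognizableInTime G (wordProblem Y) t :=
  ⟨gRecognizable_wordProblem Y, fun hrec =>
    hsuper (isPolyBounded_growthFn_of_gRecognizableInTime hX hpoly ht hrec)⟩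

open Filter in
/-- If `G` has polynomially bounded growth and `H` has (at least)
exponential growth, then for every polynomial `t`, the word problem `W(H,Y)` belongs to
`𝔏(H)` but is not recognized by any weakly `t(n)` time-bounded `G`-automaton; in
particular `𝔏(H) ⊄ 𝔏(G)ʷ_{t(n)}`. -/
theorem poly_growth_cannot_simulate_exp_growth
    {G : Type*} [Group G] (X : Finset G) (hX : Subgroup.closure (X : Set G) = ⊤)
    {H : Type*} [Group H] (Y : Finset H) (hY : Subgroup.closure (Y : Set H) = ⊤)
    (hpoly : ∃ p : Polynomial ℕ, ∀ n, growthFn X n ≤ p.eval n)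
    (hexp : ∃ b : ℝ, 1 < b ∧ ∀ᶠ n : ℕ in atTop, b ^ n ≤ (growthFn Y n : ℝ))
    (t : Polynomial ℕ) :
    GRecognizable H (wordProblem Y) ∧
    ¬ GRecognizableInTime G (wordProblem Y) (fun n => t.eval n) := by
  obtain ⟨b, hb, hgrowth⟩ := hexp
  exact poly_growth_cannot_simulate_exp_growth_general X hX Y hpoly
    (not_isPolyBounded_of_frequently_pow_le hb hgrowth.frequently) ⟨t, fun _ => le_rfl⟩
end

section
/- Suppose G is a finitely generated group and H is a subgroup of finite index in G. Then 𝔏(G)^w_{O(n)} = 𝔏(H)^w_{O(n)}: a language is recognized by a weakly linear-time bounded G-automaton if and only if it is recognized by a weakly linear-time bounded H-automaton. -/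
/-!
Fix representatives `r i` of the finitely many right cosets of `H`, with `1` representing `H`
itself, so that every element of `G` is `h * r i` for a unique pair `(h, i)`. An `H`-automaton
simulates a `G`-automaton by keeping `h` in its register and `i` in its finite control: passing
from `h * r i` to `h' * r j` multiplies the `G`-register by `(r i)⁻¹ * (h⁻¹ * h') * r j`.
Conversely, an `H`-automaton is a `G`-automaton. In both simulations one step simulates exactly one
step, so every time bound is preserved.
-/

namespace GAutomaton

variable {α G K : Type*} [Group G] [Group K]

/-- Configurations `(state, register, remaining input)` of an automaton. -/
abbrev Config (M : GAutomaton α G) : Type _ := M.Q × G × List α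

/-- The initial configuration on input `w`. -/
def start (M : GAutomaton α G) (w : List α) : M.Config := (M.q0, 1, w)

/-- A configuration is accepting if its state is, its register is trivial and no input is left. -/
def IsAccepting (M : GAutomaton α G) (c : M.Config) : Prop := c.1 ∈ M.acc ∧ c.2.1 = 1 ∧ c.2.2 = []

theorem acceptsIn_iff_exists_isAccepting {M : GAutomaton α G} {w : List α} {t : ℕ} :
    M.AcceptsIn w t ↔ ∃ k ≤ t, ∃ c, M.IsAccepting c ∧ M.StepsIn k (M.start w) c := by
  refine exists_congr fun k => and_congr_right fun _ => ⟨?_, ?_⟩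
  · rintro ⟨q, hq, h⟩
    exact ⟨(q, 1, []), ⟨hq, rfl, rfl⟩, h⟩
  · rintro ⟨⟨q, x, u⟩, ⟨hq, rfl, rfl⟩, h⟩
    exact ⟨q, hq, h⟩

/-- A functional bisimulation between automata over possibly different groups: a map of
configurations matching initial and accepting configurations, under which the steps from `F c` are
exactly the images of the steps from `c`. -/
structure IsBisimulation (M : GAutomaton α K) (N : GAutomaton α G) (F : M.Config → N.Config) :
    Prop where
  map_start (w : List α) : F (M.start w) = N.start w
  isAccepting_iff (c : M.Config) : N.IsAccepting (F c) ↔ M.IsAccepting c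
  step_iff (c : M.Config) (e : N.Config) : N.Step (F c) e ↔ ∃ d, M.Step c d ∧ F d = e

namespace IsBisimulation

variable {M : GAutomaton α K} {N : GAutomaton α G} {F : M.Config → N.Config}

theorem stepsIn_iff (hF : IsBisimulation M N F) (k : ℕ) (c : M.Config) (e : N.Config) :
    N.StepsIn k (F c) e ↔ ∃ d, M.StepsIn k c d ∧ F d = e := by
  induction k generalizing c with
  | zero => simp [StepsIn]
  | succ k ih =>
    constructor
    · rintro ⟨e', hce', he'e⟩
      obtain ⟨c', hcc', rfl⟩ := (hF.step_iff c e').1 hce'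
      obtain ⟨d, hc'd, rfl⟩ := (ih c').1 he'e
      exact ⟨d, ⟨c', hcc', hc'd⟩, rfl⟩
    · rintro ⟨d, ⟨c', hcc', hc'd⟩, rfl⟩
      exact ⟨F c', (hF.step_iff _ _).2 ⟨c', hcc', rfl⟩, (ih c').2 ⟨d, hc'd, rfl⟩⟩

theorem acceptsIn_iff (hF : IsBisimulation M N F) (w : List α) (t : ℕ) :
    N.AcceptsIn w t ↔ M.AcceptsIn w t := by
  simp only [acceptsIn_iff_exists_isAccepting, ← hF.map_start, hF.stepsIn_iff]
  refine exists_congr fun k => and_congr_right fun _ => ⟨?_, ?_⟩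
  · rintro ⟨_, hacc, d, hd, rfl⟩
    exact ⟨d, (hF.isAccepting_iff d).1 hacc, hd⟩
  · rintro ⟨d, hacc, hd⟩
    exact ⟨F d, (hF.isAccepting_iff d).2 hacc, d, hd, rfl⟩

theorem lang_eq (hF : IsBisimulation M N F) : N.lang = M.lang :=
  Set.ext fun w => exists_congr (hF.acceptsIn_iff w)

end IsBisimulation

/-- The automaton obtained by applying a group homomorphism to all register multipliers. -/
def map (f : K →* G) (M : GAutomaton α K) : GAutomaton α G where
  Q := M.Q
  finQ := M.finQ
  q0 := M.q0
  acc := M.acc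
  δ := (fun t => (t.1, t.2.1, t.2.2.1, f t.2.2.2)) '' M.δ
  finδ := M.finδ.image _

theorem step_map_iff (f : K →* G) (M : GAutomaton α K) (q : M.Q) (x : K) (u : List α)
    (e : (M.map f).Config) :
    (M.map f).Step (q, f x, u) e ↔ ∃ d, M.Step (q, x, u) d ∧ (d.1, f d.2.1, d.2.2) = e := by
  constructor
  · obtain ⟨q', y, v⟩ := e
    rintro ⟨σ, _, ⟨⟨_, _, _, m⟩, hm, heq⟩, hy, hu⟩
    obtain ⟨rfl, rfl, rfl, rfl⟩ := heq
    obtain rfl : y = f x * f m := hy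
    exact ⟨(q', x * m, v), ⟨_, m, hm, rfl, hu⟩,
      congrArg (fun z => (q', z, v)) (map_mul f x m)⟩
  · rintro ⟨⟨q', y, v⟩, ⟨σ, m, hm, hy, hu⟩, rfl⟩
    obtain rfl : y = x * m := hy
    exact ⟨σ, f m, ⟨_, hm, rfl⟩, map_mul f x m, hu⟩

theorem isBisimulation_map {f : K →* G} (hf : Function.Injective f) (M : GAutomaton α K) :
    IsBisimulation M (M.map f) fun c => (c.1, f c.2.1, c.2.2) where
  map_start _ := by simp [start, map]
  isAccepting_iff _ := and_congr_right fun _ => and_congr_left fun _ => map_eq_one_iff f hf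
  step_iff c e := step_map_iff f M c.1 c.2.1 c.2.2 e

section CosetAutomaton

variable {H : Subgroup G} {ι : Type} {r : ι → G} {i₀ : ι}

/-- The transition of a `G`-automaton simulated by a transition between pairs `(state, index)` with
multiplier in `H`, where the register `h` at index `i` stands for `h * r i`. -/
def cosetTransition {Q : Type} (r : ι → G) (t : (Q × ι) × Option α × (Q × ι) × H) :
    Q × Option α × Q × G :=
  (t.1.1, t.2.1, t.2.2.1.1, (r t.1.2)⁻¹ * t.2.2.2 * r t.2.2.1.2)

theorem finite_preimage_cosetTransition [Finite ι] {Q : Type} (r : ι → G)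
    {s : Set (Q × Option α × Q × G)} (hs : s.Finite) :
    (cosetTransition (H := H) r ⁻¹' s).Finite := by
  have hinj : Function.Injective fun t : (Q × ι) × Option α × (Q × ι) × H =>
      (cosetTransition r t, t.1.2, t.2.2.1.2) := by
    rintro ⟨⟨q, i⟩, σ, ⟨q', j⟩, h⟩ ⟨⟨p, i'⟩, τ, ⟨p', j'⟩, h'⟩ heq
    simp only [cosetTransition, Prod.mk.injEq] at heq
    obtain ⟨⟨rfl, rfl, rfl, hm⟩, rfl, rfl⟩ := heq
    simpa using hm
  exact ((hs.prod (Set.finite_univ (α := ι × ι))).preimage hinj.injOn).subset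
    fun _ ht => ⟨ht, trivial⟩

/-- The `H`-automaton simulating a `G`-automaton `M` by representing the register `h * r i` of `M`
as the register `h` together with the index `i`, which is part of the state. -/
def cosetAutomaton (H : Subgroup G) [Finite ι] (r : ι → G) (i₀ : ι) (M : GAutomaton α G) :
    GAutomaton α H where
  Q := M.Q × ι
  finQ := have := M.finQ; inferInstance
  q0 := (M.q0, i₀)
  acc := {p | p.1 ∈ M.acc ∧ p.2 = i₀}
  δ := cosetTransition r ⁻¹' M.δ
  finδ := finite_preimage_cosetTransition r M.finδ

theorem step_cosetAutomaton_iff [Finite ι] (M : GAutomaton α G)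
    (c d : (M.cosetAutomaton H r i₀).Config) :
    (M.cosetAutomaton H r i₀).Step c d ↔
      M.Step (c.1.1, c.2.1 * r c.1.2, c.2.2) (d.1.1, d.2.1 * r d.1.2, d.2.2) := by
  obtain ⟨⟨q, i⟩, x, u⟩ := c
  obtain ⟨⟨q', j⟩, y, v⟩ := d
  constructor
  · rintro ⟨σ, m, hm, hy, hu⟩
    obtain rfl : y = x * m := hy
    exact ⟨σ, _, hm, by simp [mul_assoc], hu⟩
  · rintro ⟨σ, m, hm, hy, hu⟩
    obtain rfl : m = (r i)⁻¹ * (x⁻¹ * y : H) * r j := by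
      rw [← inv_mul_eq_iff_eq_mul.2 hy]
      simp [mul_assoc]
    exact ⟨σ, x⁻¹ * y, hm, (mul_inv_cancel_left x y).symm, hu⟩

theorem isBisimulation_cosetAutomaton [Finite ι]
    (hr : Function.Bijective fun p : H × ι => (p.1 : G) * r p.2) (hi₀ : r i₀ = 1)
    (M : GAutomaton α G) :
    IsBisimulation (M.cosetAutomaton H r i₀) M fun c => (c.1.1, c.2.1 * r c.1.2, c.2.2) where
  map_start w := by simp [start, cosetAutomaton, hi₀]
  isAccepting_iff := by
    rintro ⟨⟨q, i⟩, h, u⟩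
    have mul_eq_one_iff : (h : G) * r i = 1 ↔ h = 1 ∧ i = i₀ := by
      simpa [hi₀] using hr.1.eq_iff (a := (h, i)) (b := (1, i₀))
    simp only [IsAccepting, mul_eq_one_iff]
    exact ⟨fun ⟨hq, ⟨hh, hi⟩, hu⟩ => ⟨⟨hq, hi⟩, hh, hu⟩,
      fun ⟨⟨hq, hi⟩, hh, hu⟩ => ⟨hq, ⟨hh, hi⟩, hu⟩⟩
  step_iff c := by
    rintro ⟨q, x, u⟩
    obtain ⟨⟨h, i⟩, rfl⟩ := hr.2 x
    constructor
    · exact fun hstep => ⟨((q, i), h, u), (step_cosetAutomaton_iff M _ _).2 hstep, rfl⟩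
    · rintro ⟨d, hstep, heq⟩
      exact heq ▸ (step_cosetAutomaton_iff M c d).1 hstep

end CosetAutomaton

end GAutomaton

theorem exists_bijective_mul_right_cosets {G : Type*} [Group G] (H : Subgroup G) [H.FiniteIndex] :
    ∃ r : Fin H.index → G, (∃ i₀, r i₀ = 1) ∧
      Function.Bijective fun p : H × Fin H.index => (p.1 : G) * r p.2 := by
  obtain ⟨S, hS, one_mem⟩ := H.exists_isComplement_right 1
  have : Finite S := hS.finite_right
  let e : S ≃ Fin H.index := Finite.equivFinOfCardEq hS.card_right
  refine ⟨fun i => e.symm i, ⟨e ⟨1, one_mem⟩, by simp⟩, ?_⟩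
  exact Function.Bijective.comp hS ((Equiv.refl H).prodCongr e.symm).bijective

namespace GRecognizableInTime

variable {α G K : Type*} [Group G] [Group K] {L : Language α} {t : ℕ → ℕ}

theorem map_of_injective {f : K →* G} (hf : Function.Injective f)
    (hL : GRecognizableInTime K L t) : GRecognizableInTime G L t := by
  obtain ⟨M, rfl, hM⟩ := hL
  have hbisim := M.isBisimulation_map hf
  exact ⟨M.map f, hbisim.lang_eq, fun w hw => (hbisim.acceptsIn_iff w _).2 (hM w hw)⟩

theorem restrict_of_finiteIndex (hL : GRecognizableInTime G L t) (H : Subgroup G)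
    [H.FiniteIndex] : GRecognizableInTime H L t := by
  obtain ⟨r, ⟨i₀, hi₀⟩, hr⟩ := exists_bijective_mul_right_cosets H
  obtain ⟨M, rfl, hM⟩ := hL
  have hbisim := GAutomaton.isBisimulation_cosetAutomaton hr hi₀ M
  exact ⟨M.cosetAutomaton H r i₀, hbisim.lang_eq.symm,
    fun w hw => (hbisim.acceptsIn_iff w _).1 (hM w hw)⟩

end GRecognizableInTime

theorem lintime_finiteIndex_subgroup_general {G : Type*} [Group G] (H : Subgroup G)
    [H.FiniteIndex] {α : Type*} (L : Language α) (t : ℕ → ℕ) :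
    GRecognizableInTime G L t ↔ GRecognizableInTime H L t :=
  ⟨fun hL => hL.restrict_of_finiteIndex H, fun hL => hL.map_of_injective H.subtype_injective⟩

/-- If `G` is finitely generated and `H` is a subgroup of finite index
in `G`, then `𝔏(G)ʷ_{O(n)} = 𝔏(H)ʷ_{O(n)}`. -/
theorem lintime_finiteIndex_subgroup {G : Type*} [Group G] (hfg : Group.FG G)
    (H : Subgroup G) (hfi : H.FiniteIndex) {α : Type} [Fintype α] (L : Language α) :
    GRecognizableLinTime G L ↔ GRecognizableLinTime H L :=
  exists_congr fun _ => lintime_finiteIndex_subgroup_general H L _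
end
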